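/- Let N ≥ 3, α ∈ ℝ and β, p > 0, and set φ(r) = r^α (log(1+r))^β for r > 0. Then the equation −Δu = φ(|x|) u^{−p} has a C² positive solution on ℝ^N \ {0} if and only if N + α + β + p(N−2) > 0 and α < −2. Moreover, when these two conditions hold, every C² positive solution of this equation is radially symmetric. -/

import Mathlib

open Metric Set MeasureTheory Filter

noncomputable def laplacian {N : ℕ} (u : EuclideanSpace ℝ (Fin N) → ℝ)
    (x : EuclideanSpace ℝ (Fin N)) : ℝ :=
  ∑ i, iteratedFDeriv ℝ 2 u x ![EuclideanSpace.single i 1, EuclideanSpace.single i 1]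

/-- A `C²` positive solution of `-Δu = φ(|x|) u^{-p}` on `ℝ^N \ {0}`. -/
def IsSol {N : ℕ} (φ : ℝ → ℝ) (p : ℝ) (u : EuclideanSpace ℝ (Fin N) → ℝ) : Prop :=
  ContDiffOn ℝ 2 u {(0 : EuclideanSpace ℝ (Fin N))}ᶜ ∧
    ∀ x : EuclideanSpace ℝ (Fin N), x ≠ 0 →
      0 < u x ∧ -laplacian u x = φ ‖x‖ * u x ^ (-p)

/-! In the variable `t = ‖x‖ ^ (2 - N)`, the spherical means of a function with nonnegative
Laplacian are convex. For a solution `u` and a rotation `S`, a smooth version of `|u - u ∘ S|` has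
nonnegative Laplacian, because `s ^ (-p)` decreases in `s`. Its spherical means are `o(1)` as
`t → 0`, since `u` is bounded below by the limit of its own means at infinity, and, by the Kelvin
transform, `o(t)` as `t → ∞`. A nonnegative convex function with this behaviour vanishes, so `u` is
radial.

A radial solution is a positive solution of an Emden–Fowler equation `w'' = -ψ(t) w ^ (-p)` on
`(0, ∞)`. For positive concave `w`, the function `min t 1 * w''` is integrable and `w` is at most
`w 1 * max t 1`, which forces `min t (t ^ (-p)) * ψ t` to be integrable; conversely, integrability
makes the equation for `w(t) / (1 + t)` a contractive fixed point problem with the Green kernel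
`min s t`.
-/

open Module
open scoped Topology Laplacian InnerProductSpace RealInnerProductSpace

/-! ### Calculus of the Laplacian -/

section SecondDerivative

variable {E F G : Type*} [NormedAddCommGroup E] [NormedSpace ℝ E] [NormedAddCommGroup F]
  [NormedSpace ℝ F] [NormedAddCommGroup G] [NormedSpace ℝ G]

lemma fderiv_fderiv_comp {g : F → G} {f : E → F} {x : E} (hg : ContDiffAt ℝ 2 g (f x))
    (hf : ContDiffAt ℝ 2 f x) (v w : E) :
    fderiv ℝ (fderiv ℝ (g ∘ f)) x v w =
      fderiv ℝ (fderiv ℝ g) (f x) (fderiv ℝ f x v) (fderiv ℝ f x w) +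
        fderiv ℝ g (f x) (fderiv ℝ (fderiv ℝ f) x v w) := by
  have chain : fderiv ℝ (g ∘ f) =ᶠ[𝓝 x] fun y => (fderiv ℝ g (f y)).comp (fderiv ℝ f y) := by
    filter_upwards [hf.eventually (by simp), hf.continuousAt.eventually (hg.eventually (by simp))]
      with y hfy hgy
    exact fderiv_comp y (hgy.differentiableAt two_ne_zero) (hfy.differentiableAt two_ne_zero)
  have hg' : DifferentiableAt ℝ (fderiv ℝ g) (f x) :=
    (hg.fderiv_right (m := 1) (by norm_num)).differentiableAt one_ne_zero
  have hf' : DifferentiableAt ℝ (fderiv ℝ f) x :=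
    (hf.fderiv_right (m := 1) (by norm_num)).differentiableAt one_ne_zero
  have h := (hg'.hasFDerivAt.comp x (hf.differentiableAt two_ne_zero).hasFDerivAt).clm_comp
    hf'.hasFDerivAt
  rw [chain.fderiv_eq]
  erw [h.fderiv]
  simp [add_comm]

end SecondDerivative

section Laplacian

variable {E F G : Type*} [NormedAddCommGroup E] [InnerProductSpace ℝ E] [FiniteDimensional ℝ E]
  [NormedAddCommGroup F] [NormedSpace ℝ F] [NormedAddCommGroup G] [NormedSpace ℝ G]

lemma laplacian_eq_sum_fderiv {ι : Type*} [Fintype ι] (b : OrthonormalBasis ι ℝ E) (f : E → F)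
    (x : E) : Δ f x = ∑ i, fderiv ℝ (fderiv ℝ f) x (b i) (b i) := by
  simp [InnerProductSpace.laplacian_eq_iteratedFDeriv_orthonormalBasis f b,
    iteratedFDeriv_two_apply]

lemma laplacian_comp {g : F → G} {f : E → F} {x : E} {ι : Type*} [Fintype ι]
    (b : OrthonormalBasis ι ℝ E) (hg : ContDiffAt ℝ 2 g (f x)) (hf : ContDiffAt ℝ 2 f x) :
    Δ (g ∘ f) x =
      ∑ i, fderiv ℝ (fderiv ℝ g) (f x) (fderiv ℝ f x (b i)) (fderiv ℝ f x (b i)) +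
        fderiv ℝ g (f x) (Δ f x) := by
  simp only [laplacian_eq_sum_fderiv b, fderiv_fderiv_comp hg hf, Finset.sum_add_distrib, map_sum]

lemma laplacian_comp_linearIsometryEquiv {f : E → F} {x : E} (S : E ≃ₗᵢ[ℝ] E)
    (hf : ContDiffAt ℝ 2 f (S x)) : Δ (f ∘ S) x = Δ f (S x) := by
  have hS : Δ (S : E → E) x = 0 := by
    have : fderiv ℝ (S : E → E) = fun _ => (S : E →L[ℝ] E) := funext fun y => S.fderiv
    simp [laplacian_eq_sum_fderiv (stdOrthonormalBasis ℝ E), this]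
  rw [laplacian_comp (stdOrthonormalBasis ℝ E) hf S.contDiff.contDiffAt, hS,
    laplacian_eq_sum_fderiv ((stdOrthonormalBasis ℝ E).map S)]
  simp [S.fderiv]

lemma laplacian_comp_real {F : ℝ → ℝ} {f : E → ℝ} {x : E} (hF : ContDiffAt ℝ 2 F (f x))
    (hf : ContDiffAt ℝ 2 f x) :
    Δ (F ∘ f) x = deriv^[2] F (f x) * ‖fderiv ℝ f x‖ ^ 2 + deriv F (f x) * Δ f x := by
  have h (s : ℝ) : fderiv ℝ (fderiv ℝ F) (f x) s s = s ^ 2 * deriv^[2] F (f x) := by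
    have := iteratedFDeriv_apply_eq_iteratedDeriv_mul_prod (f := F) (x := f x) (m := ![s, s])
    simpa [iteratedFDeriv_two_apply, iteratedDeriv_eq_iterate, sq] using this
  rw [laplacian_comp (stdOrthonormalBasis ℝ E) hF hf, fderiv_eq_smul_deriv,
    (stdOrthonormalBasis ℝ E).norm_dual, Finset.mul_sum]
  simp only [h, smul_eq_mul, mul_comm]

lemma laplacian_smul_fun {f : E → ℝ} {g : E → F} {x : E} (hf : ContDiffAt ℝ 2 f x)
    (hg : ContDiffAt ℝ 2 g x) :
    Δ (fun y => f y • g y) x = f x • Δ g x + (2 : ℝ) • fderiv ℝ g x (gradient f x) +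
      Δ f x • g x := by
  have product : fderiv ℝ (fun y => f y • g y) =ᶠ[𝓝 x]
      fun y => f y • fderiv ℝ g y + (fderiv ℝ f y).smulRight (g y) := by
    filter_upwards [hf.eventually (by simp), hg.eventually (by simp)] with y hfy hgy
    exact fderiv_fun_smul (hfy.differentiableAt two_ne_zero) (hgy.differentiableAt two_ne_zero)
  have hf' : DifferentiableAt ℝ (fderiv ℝ f) x :=
    (hf.fderiv_right (m := 1) (by norm_num)).differentiableAt one_ne_zero
  have hg' : DifferentiableAt ℝ (fderiv ℝ g) x :=
    (hg.fderiv_right (m := 1) (by norm_num)).differentiableAt one_ne_zero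
  have hf0 := (hf.differentiableAt two_ne_zero).hasFDerivAt
  have hg0 := (hg.differentiableAt two_ne_zero).hasFDerivAt
  have second : HasFDerivAt (fderiv ℝ fun y => f y • g y) _ x :=
    ((hf0.smul hg'.hasFDerivAt).add ((ContinuousLinearMap.smulRightL ℝ E F).hasFDerivAt_of_bilinear
      hf'.hasFDerivAt hg0)).congr_of_eventuallyEq product
  have cross : fderiv ℝ g x (gradient f x) =
      ∑ i, fderiv ℝ f x (stdOrthonormalBasis ℝ E i) • fderiv ℝ g x (stdOrthonormalBasis ℝ E i) := by
    nth_rw 1 [← (stdOrthonormalBasis ℝ E).sum_repr (gradient f x)]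
    simp [OrthonormalBasis.repr_apply_apply, inner_gradient_right]
  rw [cross]
  simp only [laplacian_eq_sum_fderiv (stdOrthonormalBasis ℝ E), second.fderiv]
  simp [Finset.sum_add_distrib, Finset.smul_sum, Finset.sum_smul, two_smul]
  abel

end Laplacian

section NormPower

variable {E : Type*} [NormedAddCommGroup E] [InnerProductSpace ℝ E]

lemma contDiffAt_norm_rpow {x : E} (hx : x ≠ 0) (q : ℝ) :
    ContDiffAt ℝ 2 (fun y : E => ‖y‖ ^ q) x :=
  (contDiffAt_norm ℝ hx).rpow_const_of_ne (norm_ne_zero_iff.mpr hx)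

variable [FiniteDimensional ℝ E]

lemma hasGradientAt_norm_rpow {x : E} (hx : x ≠ 0) (q : ℝ) :
    HasGradientAt (fun y : E => ‖y‖ ^ q) ((q * ‖x‖ ^ (q - 2)) • x) x := by
  have hr : 0 < ‖x‖ := norm_pos_iff.mpr hx
  have hnorm : HasFDerivAt (fun y : E => ‖y‖) (‖x‖⁻¹ • innerSL ℝ x) x := by
    have h := (hasFDerivAt_id x).norm_sq.sqrt (pow_ne_zero 2 hr.ne')
    simp only [id_eq, Real.sqrt_sq (norm_nonneg _)] at h
    refine h.congr_fderiv ?_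
    ext v
    simp
    field
  rw [hasGradientAt_iff_hasFDerivAt]
  refine (hnorm.rpow_const (Or.inl hr.ne')).congr_fderiv ?_
  have hpow : ‖x‖ ^ (q - 1) * ‖x‖⁻¹ = ‖x‖ ^ (q - 2) := by
    rw [← Real.rpow_neg_one, ← Real.rpow_add hr]
    ring_nf
  ext v
  simp [← hpow]
  ring

lemma laplacian_norm_rpow {x : E} (hx : x ≠ 0) (q : ℝ) :
    Δ (fun y : E => ‖y‖ ^ q) x = q * (q + finrank ℝ E - 2) * ‖x‖ ^ (q - 2) := by
  have hr : 0 < ‖x‖ := norm_pos_iff.mpr hx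
  have first : fderiv ℝ (fun y : E => ‖y‖ ^ q) =ᶠ[𝓝 x]
      fun y => (q * ‖y‖ ^ (q - 2)) • innerSL ℝ y := by
    filter_upwards [isOpen_ne.mem_nhds hx] with y hy
    rw [(hasGradientAt_norm_rpow hy q).hasFDerivAt.fderiv]
    ext v
    simp
  have second := (((hasGradientAt_norm_rpow hx (q - 2)).hasFDerivAt.const_mul q).smul
    (innerSL ℝ (E := E)).hasFDerivAt).congr_of_eventuallyEq first
  have hpow : ‖x‖ ^ (q - 2) = ‖x‖ ^ (q - 2 - 2) * ‖x‖ ^ 2 := by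
    rw [← Real.rpow_natCast, ← Real.rpow_add hr]
    norm_num
  have hsecond (v : E) : fderiv ℝ (fderiv ℝ fun y : E => ‖y‖ ^ q) x v v =
      q * ‖x‖ ^ (q - 2) * ‖v‖ ^ 2 + q * (q - 2) * ‖x‖ ^ (q - 2 - 2) * ⟪x, v⟫ ^ 2 := by
    rw [second.fderiv, ← real_inner_self_eq_norm_sq]
    change q * ‖x‖ ^ (q - 2) * ⟪v, v⟫ + q * ⟪((q - 2) * ‖x‖ ^ (q - 2 - 2)) • x, v⟫ * ⟪x, v⟫ = _
    rw [real_inner_smul_left]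
    ring
  rw [laplacian_eq_sum_fderiv (stdOrthonormalBasis ℝ E)]
  simp only [hsecond, Finset.sum_add_distrib, ← Finset.mul_sum, OrthonormalBasis.norm_eq_one,
    OrthonormalBasis.sum_sq_inner_left, hpow]
  simp
  ring

end NormPower

/-! ### The Newtonian kernel and the Kelvin transform -/

section Newton

variable {E : Type*} [NormedAddCommGroup E] [InnerProductSpace ℝ E]

/-- The Newtonian kernel `‖x‖ ^ (2 - dim E)`, the radial harmonic function on `E ∖ {0}` which
serves as the radial coordinate: it tends to `∞` at the origin and to `0` at infinity. -/
noncomputable def newtonKernel (x : E) : ℝ := ‖x‖ ^ (2 - (finrank ℝ E : ℝ))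

lemma newtonKernel_pos {x : E} (hx : x ≠ 0) : 0 < newtonKernel x :=
  Real.rpow_pos_of_pos (norm_pos_iff.mpr hx) _

lemma contDiffAt_newtonKernel {x : E} (hx : x ≠ 0) :
    ContDiffAt ℝ 2 (newtonKernel : E → ℝ) x :=
  contDiffAt_norm_rpow hx _

lemma newtonKernel_inversion (x : E) :
    newtonKernel (EuclideanGeometry.inversion 0 1 x) = (newtonKernel x)⁻¹ := by
  have h := EuclideanGeometry.dist_inversion_center (0 : E) x 1
  simp only [dist_zero_right] at h
  rw [newtonKernel, newtonKernel, h, one_pow, one_div, Real.inv_rpow (norm_nonneg x)]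

lemma inversion_zero_one_ne_zero {x : E} (hx : x ≠ 0) :
    EuclideanGeometry.inversion 0 1 x ≠ 0 :=
  mt (EuclideanGeometry.inversion_eq_center one_ne_zero).mp hx

lemma contDiffAt_inversion_zero_one {x : E} (hx : x ≠ 0) :
    ContDiffAt ℝ 2 (EuclideanGeometry.inversion (0 : E) 1) x :=
  contDiffAt_const.inversion contDiffAt_const contDiffAt_id hx

/-- The Kelvin transform: it preserves superharmonicity and interchanges the roles of the origin
and of infinity. -/
noncomputable def kelvinTransform (u : E → ℝ) (x : E) : ℝ :=
  newtonKernel x * u (EuclideanGeometry.inversion 0 1 x)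

lemma contDiffAt_kelvinTransform {u : E → ℝ} (hu : ContDiffOn ℝ 2 u {0}ᶜ) {x : E} (hx : x ≠ 0) :
    ContDiffAt ℝ 2 (kelvinTransform u) x :=
  (contDiffAt_newtonKernel hx).mul
    ((hu.contDiffAt (isOpen_ne.mem_nhds (inversion_zero_one_ne_zero hx))).comp x
      (contDiffAt_inversion_zero_one hx))

variable [FiniteDimensional ℝ E]

lemma laplacian_newtonKernel {x : E} (hx : x ≠ 0) : Δ (newtonKernel : E → ℝ) x = 0 := by
  unfold newtonKernel
  rw [laplacian_norm_rpow hx]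
  ring

lemma gradient_newtonKernel {x : E} (hx : x ≠ 0) :
    gradient (newtonKernel : E → ℝ) x =
      ((2 - (finrank ℝ E : ℝ)) * ‖x‖ ^ (-(finrank ℝ E : ℝ))) • x := by
  unfold newtonKernel
  rw [(hasGradientAt_norm_rpow hx _).gradient]
  ring_nf

lemma norm_fderiv_newtonKernel_sq {x : E} (hx : x ≠ 0) :
    ‖fderiv ℝ (newtonKernel : E → ℝ) x‖ ^ 2 =
      ((finrank ℝ E : ℝ) - 2) ^ 2 * ‖x‖ ^ (-(2 * ((finrank ℝ E : ℝ) - 1))) := by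
  have hr : 0 < ‖x‖ := norm_pos_iff.mpr hx
  rw [← (InnerProductSpace.toDual ℝ E).symm.norm_map, ← gradient, gradient_newtonKernel hx,
    norm_smul, mul_pow, norm_mul, mul_pow,
    Real.norm_eq_abs, sq_abs, Real.norm_of_nonneg (by positivity), mul_assoc,
    ← Real.rpow_natCast (‖x‖ ^ _), ← Real.rpow_mul hr.le, ← Real.rpow_natCast ‖x‖,
    ← Real.rpow_add hr]
  congr 1
  · ring
  · congr 1
    push_cast
    ring

lemma laplacian_inversion_zero_one {x : E} (hx : x ≠ 0) :
    Δ (EuclideanGeometry.inversion (0 : E) 1) x =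
      (-(2 * ((finrank ℝ E : ℝ) - 2)) * ‖x‖ ^ (-4 : ℝ)) • x := by
  have hinv : EuclideanGeometry.inversion (0 : E) 1 = fun y => ‖y‖ ^ (-2 : ℝ) • y := by
    funext y
    simp [EuclideanGeometry.inversion]
  have hid : Δ (fun y : E => y) x = 0 := by
    have : fderiv ℝ (fun y : E => y) = fun _ => ContinuousLinearMap.id ℝ E :=
      funext fun _ => fderiv_fun_id
    simp [laplacian_eq_sum_fderiv (stdOrthonormalBasis ℝ E), this]
  rw [hinv, laplacian_smul_fun (contDiffAt_norm_rpow hx _) contDiffAt_fun_id, hid,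
    laplacian_norm_rpow hx, (hasGradientAt_norm_rpow hx _).gradient]
  norm_num
  module

lemma laplacian_kelvinTransform {u : E → ℝ} (hu : ContDiffOn ℝ 2 u {0}ᶜ) {x : E} (hx : x ≠ 0) :
    Δ (kelvinTransform u) x =
      newtonKernel x * ‖x‖ ^ (-4 : ℝ) * Δ u (EuclideanGeometry.inversion 0 1 x) := by
  have hr : 0 < ‖x‖ := norm_pos_iff.mpr hx
  set Φ : E → E := EuclideanGeometry.inversion 0 1 with hΦ
  have hΦx := contDiffAt_inversion_zero_one hx
  have hux : ContDiffAt ℝ 2 u (Φ x) :=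
    hu.contDiffAt (isOpen_ne.mem_nhds (inversion_zero_one_ne_zero hx))
  let S : E ≃ₗᵢ[ℝ] E := (ℝ ∙ x)ᗮ.reflection
  have hDΦ (v : E) : fderiv ℝ Φ x v = ‖x‖ ^ (-2 : ℝ) • S v := by
    rw [hΦ, (EuclideanGeometry.hasFDerivAt_inversion hx).fderiv]
    simp [S]
  have comp : Δ (u ∘ Φ) x = ‖x‖ ^ (-4 : ℝ) * Δ u (Φ x) + fderiv ℝ u (Φ x) (Δ Φ x) := by
    rw [laplacian_comp (stdOrthonormalBasis ℝ E) hux hΦx,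
      laplacian_eq_sum_fderiv ((stdOrthonormalBasis ℝ E).map S) u, Finset.mul_sum]
    have hpow : ‖x‖ ^ (-4 : ℝ) = ‖x‖ ^ (-2 : ℝ) * ‖x‖ ^ (-2 : ℝ) := by
      rw [← Real.rpow_add hr]
      norm_num
    simp only [hDΦ, map_smul, OrthonormalBasis.map_apply, smul_apply, smul_eq_mul,
      hpow, mul_assoc]
  have cross : fderiv ℝ (u ∘ Φ) x x = - ‖x‖ ^ (-2 : ℝ) * fderiv ℝ u (Φ x) x := by
    rw [fderiv_comp x (hux.differentiableAt two_ne_zero) (hΦx.differentiableAt two_ne_zero)]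
    simp [hDΦ, S, Submodule.reflection_orthogonalComplement_singleton_eq_neg]
  have hτ : newtonKernel x * ‖x‖ ^ (-4 : ℝ) = ‖x‖ ^ (-(finrank ℝ E : ℝ)) * ‖x‖ ^ (-2 : ℝ) := by
    rw [newtonKernel, ← Real.rpow_add hr, ← Real.rpow_add hr]
    ring_nf
  have product := laplacian_smul_fun (contDiffAt_newtonKernel hx) (hux.comp x hΦx)
  rw [laplacian_newtonKernel hx, gradient_newtonKernel hx, map_smul, cross, comp,
    laplacian_inversion_zero_one hx, map_smul] at product
  simp only [smul_eq_mul, Function.comp_apply] at product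
  refine product.trans ?_
  linear_combination (-(2 * ((finrank ℝ E : ℝ) - 2)) * fderiv ℝ u (Φ x) x) * hτ

end Newton

/-! ### Spherical means -/

section ParametricIntegral

variable {E F K : Type*} [NormedAddCommGroup E] [NormedAddCommGroup F] [TopologicalSpace K]
  [CompactSpace K] [MeasurableSpace K] [OpensMeasurableSpace K] {μ : Measure K}
  [IsFiniteMeasure μ] {s : Set E}

lemma integrable_of_continuous {f : K → F} (hf : Continuous f) : Integrable f μ :=
  hf.integrable_of_hasCompactSupport (HasCompactSupport.of_compactSpace f)

lemma integrable_of_continuousOn_prod {f : E → K → F} (hf : ContinuousOn f.uncurry (s ×ˢ univ))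
    {x : E} (hx : x ∈ s) : Integrable (f x) μ :=
  integrable_of_continuous <| hf.comp_continuous (f := (x, ·)) (by fun_prop) fun _ => ⟨hx, trivial⟩

variable [NormedSpace ℝ E] [ProperSpace E] [NormedSpace ℝ F]

lemma hasFDerivAt_integral_of_continuousOn (hs : IsOpen s) {f : E → K → F}
    {f' : E → K → E →L[ℝ] F} (hf : ContinuousOn f.uncurry (s ×ˢ univ))
    (hf' : ContinuousOn f'.uncurry (s ×ˢ univ))
    (hderiv : ∀ x ∈ s, ∀ k, HasFDerivAt (f · k) (f' x k) x) {x : E} (hx : x ∈ s) :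
    HasFDerivAt (fun y => ∫ k, f y k ∂μ) (∫ k, f' x k ∂μ) x := by
  obtain ⟨δ, hδ, hδs⟩ := nhds_basis_closedBall.mem_iff.mp (hs.mem_nhds hx)
  obtain ⟨C, hC⟩ := ((isCompact_closedBall x δ).prod isCompact_univ).exists_bound_of_continuousOn
    (hf'.mono (prod_mono_left hδs))
  refine hasFDerivAt_integral_of_dominated_of_fderiv_le (bound := fun _ => C)
    (closedBall_mem_nhds x hδ) ?_ (integrable_of_continuousOn_prod hf hx)
    (integrable_of_continuousOn_prod hf' hx).aestronglyMeasurable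
    (.of_forall fun k y hy => hC (y, k) ⟨hy, trivial⟩) (integrable_const C)
    (.of_forall fun k y hy => hderiv y (hδs hy) k)
  filter_upwards [hs.mem_nhds hx] with y hy
  exact (integrable_of_continuousOn_prod hf hy).aestronglyMeasurable

lemma contDiffOn_one_integral (hs : IsOpen s) {f : E → K → F}
    {f' : E → K → E →L[ℝ] F} (hf : ContinuousOn f.uncurry (s ×ˢ univ))
    (hf' : ContinuousOn f'.uncurry (s ×ˢ univ))
    (hderiv : ∀ x ∈ s, ∀ k, HasFDerivAt (f · k) (f' x k) x) :
    ContDiffOn ℝ 1 (fun y => ∫ k, f y k ∂μ) s := by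
  have hD (x : E) (hx : x ∈ s) := hasFDerivAt_integral_of_continuousOn (μ := μ) hs hf hf' hderiv hx
  rw [show (1 : WithTop ℕ∞) = 0 + 1 from rfl, contDiffOn_succ_iff_fderiv_of_isOpen hs]
  refine ⟨fun x hx => (hD x hx).differentiableAt.differentiableWithinAt, by simp, ?_⟩
  exact contDiffOn_zero.2 <| (continuousOn_integral_of_compact_support isCompact_univ hf'
    (by simp)).congr fun x hx => (hD x hx).fderiv

end ParametricIntegral

section OrthogonalGroup

variable {E : Type*} [NormedAddCommGroup E] [InnerProductSpace ℝ E] [FiniteDimensional ℝ E]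

instance continuousStar_continuousLinearMap : ContinuousStar (E →L[ℝ] E) :=
  ⟨(ContinuousLinearMap.adjoint (𝕜 := ℝ) (E := E) (F := E)).continuous⟩

instance compactSpace_unitary : CompactSpace (unitary (E →L[ℝ] E)) := by
  refine isCompact_iff_compactSpace.mp <| isCompact_of_isClosed_isBounded isClosed_unitary <|
    (isBounded_closedBall (x := (0 : E →L[ℝ] E)) (r := 1)).subset fun U hU => ?_
  rw [mem_closedBall_zero_iff]
  rcases subsingleton_or_nontrivial (E →L[ℝ] E)
  · simp [Subsingleton.elim U 0]
  · exact (CStarRing.norm_of_mem_unitary hU).le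

variable (E) in
/-- The Haar probability measure on the orthogonal group of `E`, with which spherical means are
taken: for this the group action is more convenient than surface measure. -/
noncomputable def orthogonalHaar : Measure (unitary (E →L[ℝ] E)) := Measure.haarMeasure ⊤

instance : (orthogonalHaar E).IsHaarMeasure := by unfold orthogonalHaar; infer_instance

instance : IsProbabilityMeasure (orthogonalHaar E) :=
  ⟨Measure.haarMeasure_self (K₀ := (⊤ : TopologicalSpace.PositiveCompacts _))⟩

instance : (orthogonalHaar E).IsMulRightInvariant := ⟨fun S => by
  have : IsProbabilityMeasure ((orthogonalHaar E).map (· * S)) :=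
    Measure.isProbabilityMeasure_map (by fun_prop)
  exact Measure.isHaarMeasure_eq_of_isProbabilityMeasure _ _⟩

lemma norm_unitary_apply (R : unitary (E →L[ℝ] E)) (x : E) : ‖(R : E →L[ℝ] E) x‖ = ‖x‖ :=
  (Unitary.linearIsometryEquiv R).norm_map x

lemma unitary_apply_ne_zero (R : unitary (E →L[ℝ] E)) {x : E} (hx : x ≠ 0) :
    (R : E →L[ℝ] E) x ≠ 0 := by
  rwa [← norm_ne_zero_iff, norm_unitary_apply, norm_ne_zero_iff]

lemma exists_unitary_apply_eq {x y : E} (h : ‖x‖ = ‖y‖) :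
    ∃ S : unitary (E →L[ℝ] E), (S : E →L[ℝ] E) x = y :=
  ⟨Unitary.linearIsometryEquiv.symm (Submodule.reflection (ℝ ∙ (x - y))ᗮ), by
    simpa using Submodule.reflection_sub h⟩

end OrthogonalGroup

section SphericalMean

variable {E : Type*} [NormedAddCommGroup E] [InnerProductSpace ℝ E] [FiniteDimensional ℝ E]

/-- The average of `g` over the sphere centred at the origin that passes through `x`. -/
noncomputable def sphericalMean (g : E → ℝ) (x : E) : ℝ :=
  ∫ R : unitary (E →L[ℝ] E), g ((R : E →L[ℝ] E) x) ∂(orthogonalHaar E)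

variable {g h : E → ℝ} {x y : E}

lemma sphericalMean_eq_of_norm_eq (h : ‖x‖ = ‖y‖) : sphericalMean g x = sphericalMean g y := by
  obtain ⟨S, rfl⟩ := exists_unitary_apply_eq h
  exact (integral_mul_right_eq_self (fun R : unitary (E →L[ℝ] E) => g ((R : E →L[ℝ] E) x)) S).symm

lemma sphericalMean_comp_unitary (S : unitary (E →L[ℝ] E)) :
    sphericalMean (g ∘ (S : E →L[ℝ] E)) x = sphericalMean g x :=
  integral_mul_left_eq_self (fun R : unitary (E →L[ℝ] E) => g ((R : E →L[ℝ] E) x)) S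

lemma sphericalMean_congr (hgh : ∀ y, ‖y‖ = ‖x‖ → g y = h y) :
    sphericalMean g x = sphericalMean h x :=
  integral_congr_ae (.of_forall fun R => hgh _ (norm_unitary_apply R x))

lemma sphericalMean_const (c : ℝ) : sphericalMean (fun _ => c) x = c := by
  simp [sphericalMean]

lemma continuous_comp_unitary (hg : ContinuousOn g {0}ᶜ) (hx : x ≠ 0) :
    Continuous fun R : unitary (E →L[ℝ] E) => g ((R : E →L[ℝ] E) x) :=
  hg.comp_continuous (by fun_prop) fun R => unitary_apply_ne_zero R hx

lemma integrable_comp_unitary (hg : ContinuousOn g {0}ᶜ) (hx : x ≠ 0) :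
    Integrable (fun R : unitary (E →L[ℝ] E) => g ((R : E →L[ℝ] E) x)) (orthogonalHaar E) :=
  integrable_of_continuous (continuous_comp_unitary hg hx)

lemma sphericalMean_mono (hg : ContinuousOn g {0}ᶜ) (hh : ContinuousOn h {0}ᶜ) (hx : x ≠ 0)
    (hgh : ∀ y, ‖y‖ = ‖x‖ → g y ≤ h y) : sphericalMean g x ≤ sphericalMean h x :=
  integral_mono (integrable_comp_unitary hg hx) (integrable_comp_unitary hh hx)
    fun R => hgh _ (norm_unitary_apply R x)

lemma sphericalMean_add (hg : ContinuousOn g {0}ᶜ) (hh : ContinuousOn h {0}ᶜ) (hx : x ≠ 0) :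
    sphericalMean (fun y => g y + h y) x = sphericalMean g x + sphericalMean h x :=
  integral_add (integrable_comp_unitary hg hx) (integrable_comp_unitary hh hx)

lemma eq_zero_of_sphericalMean_eq_zero (hg : ContinuousOn g {0}ᶜ) (hx : x ≠ 0)
    (hg0 : ∀ y ≠ 0, 0 ≤ g y) (h : sphericalMean g x = 0) : g x = 0 := by
  have hae := (integral_eq_zero_iff_of_nonneg (fun R => hg0 _ (unitary_apply_ne_zero R hx))
    (integrable_comp_unitary hg hx)).mp h
  have := ((continuous_comp_unitary hg hx).ae_eq_iff_eq (orthogonalHaar E) continuous_const).mp hae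
  exact congrFun this 1

lemma continuousOn_comp_unitary_prod {F : Type*} [TopologicalSpace F] {f : E → F}
    (hf : ContinuousOn f {0}ᶜ) :
    ContinuousOn (fun q : E × unitary (E →L[ℝ] E) => f ((q.2 : E →L[ℝ] E) q.1))
      ({0}ᶜ ×ˢ univ) :=
  hf.comp (by fun_prop) fun q hq => unitary_apply_ne_zero q.2 hq.1

/-- The derivative of `g ∘ R` at `x`, by the chain rule: the integrand of the derivative of
`sphericalMean g`. -/
noncomputable def rotatedFDeriv (g : E → ℝ) (x : E) (R : unitary (E →L[ℝ] E)) : E →L[ℝ] ℝ :=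
  (fderiv ℝ g ((R : E →L[ℝ] E) x)).comp (R : E →L[ℝ] E)

/-- The second derivative of `g ∘ R` at `x`, by the chain rule: the integrand of the second
derivative of `sphericalMean g`. -/
noncomputable def rotatedHessian (g : E → ℝ) (x : E) (R : unitary (E →L[ℝ] E)) :
    E →L[ℝ] E →L[ℝ] ℝ :=
  ((ContinuousLinearMap.compL ℝ E E ℝ).flip (R : E →L[ℝ] E)).comp
    ((fderiv ℝ (fderiv ℝ g) ((R : E →L[ℝ] E) x)).comp (R : E →L[ℝ] E))

lemma sum_rotatedHessian {ι : Type*} [Fintype ι] (b : OrthonormalBasis ι ℝ E)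
    (R : unitary (E →L[ℝ] E)) :
    ∑ i, rotatedHessian g x R (b i) (b i) = Δ g ((R : E →L[ℝ] E) x) := by
  simp only [rotatedHessian, laplacian_eq_sum_fderiv (b.map (Unitary.linearIsometryEquiv R))]
  rfl

variable (hg : ContDiffOn ℝ 2 g {0}ᶜ)
include hg

lemma hasFDerivAt_comp_unitary (hx : x ≠ 0) (R : unitary (E →L[ℝ] E)) :
    HasFDerivAt (fun y => g ((R : E →L[ℝ] E) y)) (rotatedFDeriv g x R) x :=
  ((hg.differentiableOn two_ne_zero).differentiableAt
    (isOpen_compl_singleton.mem_nhds (unitary_apply_ne_zero R hx))).hasFDerivAt.comp x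
    (R : E →L[ℝ] E).hasFDerivAt

lemma continuousOn_rotatedFDeriv : ContinuousOn (rotatedFDeriv g).uncurry ({0}ᶜ ×ˢ univ) :=
  (continuousOn_comp_unitary_prod
    (hg.continuousOn_fderiv_of_isOpen isOpen_compl_singleton one_le_two)).clm_comp (by fun_prop)

lemma hasFDerivAt_rotatedFDeriv (hx : x ≠ 0) (R : unitary (E →L[ℝ] E)) :
    HasFDerivAt (rotatedFDeriv g · R) (rotatedHessian g x R) x := by
  have h := (hg.contDiffAt (isOpen_compl_singleton.mem_nhds
    (unitary_apply_ne_zero R hx))).fderiv_right (m := 1) (by norm_num)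
  exact ((ContinuousLinearMap.compL ℝ E E ℝ).flip (R : E →L[ℝ] E)).hasFDerivAt.comp x
    ((h.differentiableAt one_ne_zero).hasFDerivAt.comp x (R : E →L[ℝ] E).hasFDerivAt)

lemma continuousOn_rotatedHessian : ContinuousOn (rotatedHessian g).uncurry ({0}ᶜ ×ˢ univ) := by
  have h := (hg.fderiv_of_isOpen (m := 1) isOpen_compl_singleton
    (by norm_num)).continuousOn_fderiv_of_isOpen isOpen_compl_singleton le_rfl
  exact .clm_comp (by fun_prop) <| .clm_comp (continuousOn_comp_unitary_prod h) (by fun_prop)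

lemma hasFDerivAt_sphericalMean (hx : x ≠ 0) :
    HasFDerivAt (sphericalMean g) (∫ R, rotatedFDeriv g x R ∂(orthogonalHaar E)) x :=
  hasFDerivAt_integral_of_continuousOn isOpen_compl_singleton
    (f := fun x (R : unitary (E →L[ℝ] E)) => g ((R : E →L[ℝ] E) x))
    (continuousOn_comp_unitary_prod hg.continuousOn) (continuousOn_rotatedFDeriv hg)
    (fun _ => hasFDerivAt_comp_unitary hg) hx

lemma contDiffOn_sphericalMean : ContDiffOn ℝ 2 (sphericalMean g) {0}ᶜ := by
  rw [show (2 : WithTop ℕ∞) = 1 + 1 from rfl,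
    contDiffOn_succ_iff_fderiv_of_isOpen isOpen_compl_singleton]
  refine ⟨fun x hx => (hasFDerivAt_sphericalMean hg hx).differentiableAt.differentiableWithinAt,
    by simp, ?_⟩
  exact (contDiffOn_one_integral isOpen_compl_singleton (continuousOn_rotatedFDeriv hg)
    (continuousOn_rotatedHessian hg) fun _ => hasFDerivAt_rotatedFDeriv hg).congr
    fun x hx => (hasFDerivAt_sphericalMean hg hx).fderiv

lemma laplacian_sphericalMean (hx : x ≠ 0) :
    Δ (sphericalMean g) x = sphericalMean (Δ g) x := by
  set b := stdOrthonormalBasis ℝ E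
  have hfst : fderiv ℝ (sphericalMean g) =ᶠ[𝓝 x]
      fun y => ∫ R, rotatedFDeriv g y R ∂(orthogonalHaar E) := by
    filter_upwards [isOpen_compl_singleton.mem_nhds hx] with y hy
    exact (hasFDerivAt_sphericalMean hg hy).fderiv
  have hsnd := hasFDerivAt_integral_of_continuousOn (μ := orthogonalHaar E) isOpen_compl_singleton
    (continuousOn_rotatedFDeriv hg) (continuousOn_rotatedHessian hg)
    (fun _ => hasFDerivAt_rotatedFDeriv hg) hx
  have hint := integrable_of_continuousOn_prod (μ := orthogonalHaar E) (s := {0}ᶜ)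
    (F := E →L[ℝ] E →L[ℝ] ℝ) (continuousOn_rotatedHessian hg) hx
  rw [laplacian_eq_sum_fderiv b, hfst.fderiv_eq, hsnd.fderiv]
  simp only [ContinuousLinearMap.integral_apply hint,
    ContinuousLinearMap.integral_apply (hint.apply_continuousLinearMap _)]
  rw [← integral_finsetSum _ fun i _ =>
    (hint.apply_continuousLinearMap (b i)).apply_continuousLinearMap (b i)]
  exact integral_congr_ae (.of_forall fun R => sum_rotatedHessian b R)

end SphericalMean

section Profile

variable {E : Type*} [NormedAddCommGroup E] [InnerProductSpace ℝ E]

lemma laplacian_comp_newtonKernel [FiniteDimensional ℝ E] {w : ℝ → ℝ} {x : E} (hx : x ≠ 0)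
    (hw : ContDiffAt ℝ 2 w (newtonKernel x)) :
    Δ (w ∘ (newtonKernel : E → ℝ)) x = deriv^[2] w (newtonKernel x) *
      ((finrank ℝ E - 2) ^ 2 * ‖x‖ ^ (-(2 * (finrank ℝ E - 1)) : ℝ)) := by
  rw [laplacian_comp_real hw (contDiffAt_newtonKernel hx), laplacian_newtonKernel hx,
    norm_fderiv_newtonKernel_sq hx, mul_zero, add_zero]

/-- The point at which the Newtonian kernel takes the value `t > 0`, on a ray that is fixed once
and for all (junk if `E` is trivial). -/
noncomputable def newtonPoint (t : ℝ) : E :=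
  t ^ (1 / (2 - (finrank ℝ E : ℝ))) • Classical.epsilon fun e : E => ‖e‖ = 1

/-- The spherical means of `g` as a function of the Newtonian kernel, the variable in which the
radial Laplacian becomes a multiple of the second derivative. -/
noncomputable def meanProfile [FiniteDimensional ℝ E] (g : E → ℝ) (t : ℝ) : ℝ :=
  sphericalMean g (newtonPoint t)

variable {t : ℝ}

lemma contDiffAt_newtonPoint (ht : 0 < t) : ContDiffAt ℝ 2 (newtonPoint : ℝ → E) t :=
  (Real.contDiffAt_rpow_const_of_ne ht.ne').smul contDiffAt_const

variable (hd : 3 ≤ finrank ℝ E)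
include hd

lemma two_sub_finrank_neg : (2 - (finrank ℝ E : ℝ)) < 0 := by
  have : (3 : ℝ) ≤ finrank ℝ E := mod_cast hd
  linarith

lemma norm_newtonPoint (ht : 0 < t) :
    ‖(newtonPoint t : E)‖ = t ^ (1 / (2 - (finrank ℝ E : ℝ))) := by
  have : Nontrivial E := nontrivial_of_finrank_pos (R := ℝ) (by omega)
  rw [newtonPoint, norm_smul, Classical.epsilon_spec (exists_norm_eq E zero_le_one), mul_one,
    Real.norm_of_nonneg (by positivity)]

lemma newtonPoint_ne_zero (ht : 0 < t) : (newtonPoint t : E) ≠ 0 := by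
  rw [← norm_pos_iff, norm_newtonPoint hd ht]
  positivity

lemma newtonKernel_newtonPoint (ht : 0 < t) : newtonKernel (newtonPoint t : E) = t := by
  rw [newtonKernel, norm_newtonPoint hd ht, ← Real.rpow_mul ht.le,
    one_div_mul_cancel (two_sub_finrank_neg hd).ne, Real.rpow_one]

lemma newtonKernel_rpow (x : E) :
    newtonKernel x ^ (1 / (2 - (finrank ℝ E : ℝ))) = ‖x‖ := by
  rw [newtonKernel, ← Real.rpow_mul (norm_nonneg x),
    mul_one_div_cancel (two_sub_finrank_neg hd).ne, Real.rpow_one]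

lemma newtonKernel_anti {x y : E} (hx : x ≠ 0) (hxy : ‖x‖ ≤ ‖y‖) :
    newtonKernel y ≤ newtonKernel x :=
  Real.rpow_le_rpow_of_nonpos (norm_pos_iff.mpr hx) hxy (two_sub_finrank_neg hd).le

lemma tendsto_newtonKernel_nhdsNE_zero : Tendsto (newtonKernel : E → ℝ) (𝓝[≠] 0) atTop :=
  (tendsto_rpow_neg_nhdsGT_zero (two_sub_finrank_neg hd)).comp tendsto_norm_nhdsNE_zero

lemma norm_newtonPoint_newtonKernel {x : E} (hx : x ≠ 0) :
    ‖(newtonPoint (newtonKernel x) : E)‖ = ‖x‖ := by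
  rw [norm_newtonPoint hd (newtonKernel_pos hx), newtonKernel_rpow hd]

variable [FiniteDimensional ℝ E]

variable {g : E → ℝ}

lemma meanProfile_newtonKernel {x : E} (hx : x ≠ 0) :
    meanProfile g (newtonKernel x) = sphericalMean g x :=
  sphericalMean_eq_of_norm_eq (norm_newtonPoint_newtonKernel hd hx)

variable (hg : ContDiffOn ℝ 2 g {0}ᶜ)
include hg

lemma contDiffAt_meanProfile (ht : 0 < t) : ContDiffAt ℝ 2 (meanProfile g) t :=
  ((contDiffOn_sphericalMean hg).contDiffAt (isOpen_compl_singleton.mem_nhds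
    (newtonPoint_ne_zero hd ht))).comp t (contDiffAt_newtonPoint ht)

lemma differentiableOn_deriv_meanProfile :
    DifferentiableOn ℝ (deriv (meanProfile g)) (Ioi 0) := fun t ht => by
  have h : ContDiffOn ℝ 2 (meanProfile g) (Ioi 0) := fun t ht =>
    (contDiffAt_meanProfile hd hg ht).contDiffWithinAt
  exact (h.deriv_of_isOpen (m := 1) isOpen_Ioi (by norm_num)).differentiableOn one_ne_zero t ht

lemma deriv2_meanProfile (ht : 0 < t) :
    deriv^[2] (meanProfile g) t *
      ((finrank ℝ E - 2) ^ 2 * ‖(newtonPoint t : E)‖ ^ (-(2 * (finrank ℝ E - 1)) : ℝ)) =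
      meanProfile (Δ g) t := by
  set x : E := newtonPoint t
  have hx : x ≠ 0 := newtonPoint_ne_zero hd ht
  have hxt : newtonKernel x = t := newtonKernel_newtonPoint hd ht
  have hmean : sphericalMean g =ᶠ[𝓝 x] meanProfile g ∘ newtonKernel := by
    filter_upwards [isOpen_compl_singleton.mem_nhds hx] with y hy
    exact (meanProfile_newtonKernel hd hy).symm
  rw [meanProfile, ← laplacian_sphericalMean hg hx,
    (InnerProductSpace.laplacian_congr_nhds hmean).eq_of_nhds,
    laplacian_comp_newtonKernel hx (by rw [hxt]; exact contDiffAt_meanProfile hd hg ht), hxt]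

lemma convexOn_meanProfile (hΔ : ∀ x ≠ 0, 0 ≤ Δ g x) :
    ConvexOn ℝ (Ioi 0) (meanProfile g) := by
  refine convexOn_of_deriv2_nonneg' (convex_Ioi 0) (fun t ht => ((contDiffAt_meanProfile hd hg
    ht).differentiableAt two_ne_zero).differentiableWithinAt)
    (differentiableOn_deriv_meanProfile hd hg) fun t ht => ?_
  have hd2 : 0 < (finrank ℝ E : ℝ) - 2 := by linarith [two_sub_finrank_neg hd]
  have hnorm : 0 < ‖(newtonPoint t : E)‖ := norm_pos_iff.mpr (newtonPoint_ne_zero hd ht)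
  have hmean : 0 ≤ meanProfile (Δ g) t :=
    integral_nonneg fun R => hΔ _ (unitary_apply_ne_zero R (newtonPoint_ne_zero hd ht))
  rw [← deriv2_meanProfile hd hg ht] at hmean
  exact nonneg_of_mul_nonneg_left hmean (by positivity)

lemma concaveOn_meanProfile (hΔ : ∀ x ≠ 0, Δ g x ≤ 0) :
    ConcaveOn ℝ (Ioi 0) (meanProfile g) := by
  have hneg (x : E) (hx : x ≠ 0) : 0 ≤ Δ (-g) x := by
    simpa only [InnerProductSpace.laplacian_neg, Pi.neg_apply, neg_nonneg] using hΔ x hx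
  have h := (convexOn_meanProfile hd hg.neg hneg).neg
  refine h.congr fun t _ => ?_
  simp [meanProfile, sphericalMean, integral_neg]

end Profile

section ConcaveOnIoi

variable {w : ℝ → ℝ} {s t : ℝ}

lemma monotoneOn_of_concaveOn_nonneg (hw : ConcaveOn ℝ (Ioi 0) w) (h0 : ∀ t > 0, 0 ≤ w t) :
    MonotoneOn w (Ioi 0) := by
  intro s hs t ht hst
  rcases hst.eq_or_lt with rfl | hst
  · exact le_rfl
  by_contra! hlt
  obtain ⟨T, htT, hT⟩ : ∃ T > t, w t + (w t - w s) / (t - s) * (T - t) < 0 := by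
    have hk : (w t - w s) / (t - s) < 0 := div_neg_of_neg_of_pos (by linarith) (by linarith)
    have h : Tendsto (fun T => w t + (w t - w s) / (t - s) * (T - t)) atTop atBot :=
      tendsto_atBot_add_const_left _ _
        ((tendsto_atTop_add_const_right _ (-t) tendsto_id).const_mul_atTop_of_neg hk)
    exact ((eventually_gt_atTop t).and (h.eventually_lt_atBot 0)).exists
  have hslope := hw.slope_anti_adjacent hs (ht.trans htT) hst htT
  rw [div_le_iff₀ (by linarith)] at hslope
  linarith [h0 T (ht.trans htT)]

lemma div_antitoneOn_of_concaveOn_nonneg (hw : ConcaveOn ℝ (Ioi 0) w) (h0 : ∀ t > 0, 0 ≤ w t) :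
    AntitoneOn (fun t => w t / t) (Ioi 0) := by
  intro s hs t ht hst
  rcases hst.eq_or_lt with rfl | hst
  · exact le_rfl
  have hnear : ∀ᶠ δ in 𝓝[>] (0 : ℝ), (w t - w s) * (s - δ) ≤ w s * (t - s) := by
    filter_upwards [Ioo_mem_nhdsGT hs] with δ hδ
    have hslope := hw.slope_anti_adjacent hδ.1 ht hδ.2 hst
    rw [div_le_div_iff₀ (by linarith) (by linarith [hδ.2])] at hslope
    nlinarith [h0 δ hδ.1]
  have hlim : Tendsto (fun δ => (w t - w s) * (s - δ)) (𝓝[>] (0 : ℝ))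
      (𝓝 ((w t - w s) * (s - 0))) :=
    (Continuous.tendsto (by fun_prop) 0).mono_left nhdsWithin_le_nhds
  have := le_of_tendsto hlim hnear
  change w t / t ≤ w s / s
  rw [div_le_div_iff₀ ht hs]
  nlinarith

end ConcaveOnIoi

/-! ### Positive superharmonic functions -/

section Superharmonic

variable {E : Type*} [NormedAddCommGroup E] [InnerProductSpace ℝ E] [FiniteDimensional ℝ E]
  {f g : E → ℝ} {x y : E}

lemma continuous_sphericalMean (hf : Continuous f) : Continuous (sphericalMean f) := by
  rw [← continuousOn_univ]
  exact continuousOn_integral_of_compact_support isCompact_univ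
    (f := fun x (R : unitary (E →L[ℝ] E)) => f ((R : E →L[ℝ] E) x)) (by fun_prop) (by simp)

lemma sphericalMean_zero : sphericalMean f 0 = f 0 := by
  simp [sphericalMean]

lemma laplacian_comp_add_left : Δ (fun z => f (y + z)) x = Δ f (y + x) := by
  simp only [InnerProductSpace.laplacian_eq_iteratedFDeriv_stdOrthonormalBasis,
    iteratedFDeriv_comp_add_left]

lemma sphericalMean_anti (hd : 3 ≤ finrank ℝ E) (hg : ContDiffOn ℝ 2 g {0}ᶜ)
    (hg0 : ∀ x ≠ 0, 0 ≤ g x) (hΔ : ∀ x ≠ 0, Δ g x ≤ 0) (hx : x ≠ 0) (hxy : ‖x‖ ≤ ‖y‖) :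
    sphericalMean g y ≤ sphericalMean g x := by
  have hy : y ≠ 0 := norm_pos_iff.mp ((norm_pos_iff.mpr hx).trans_le hxy)
  rw [← meanProfile_newtonKernel hd hx, ← meanProfile_newtonKernel hd hy]
  exact monotoneOn_of_concaveOn_nonneg (concaveOn_meanProfile hd hg hΔ)
    (fun t ht => integral_nonneg fun R =>
      hg0 _ (unitary_apply_ne_zero R (newtonPoint_ne_zero hd ht)))
    (newtonKernel_pos hy) (newtonKernel_pos hx) (newtonKernel_anti hd hx hxy)

lemma sphericalMean_comp_add_left_le (hd : 3 ≤ finrank ℝ E) (hg : ContDiff ℝ 2 g)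
    (hg0 : ∀ x, 0 ≤ g x) (hΔ : ∀ x, Δ g x ≤ 0) (x y : E) :
    sphericalMean (fun z => g (y + z)) x ≤ g y := by
  rcases eq_or_ne x 0 with rfl | hx
  · simp [sphericalMean_zero]
  have hgy : ContDiff ℝ 2 fun z => g (y + z) := by fun_prop
  have hlim : Tendsto (fun k : ℝ => sphericalMean (fun z => g (y + z)) (k • x)) (𝓝[>] 0)
      (𝓝 (g y)) := by
    have hcont := continuous_sphericalMean hgy.continuous
    have h : Continuous fun k : ℝ => sphericalMean (fun z => g (y + z)) (k • x) := by fun_prop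
    simpa [sphericalMean_zero] using (h.tendsto 0).mono_left nhdsWithin_le_nhds
  refine ge_of_tendsto hlim ?_
  filter_upwards [Ioo_mem_nhdsGT zero_lt_one] with k hk
  refine sphericalMean_anti hd hgy.contDiffOn (fun z _ => hg0 _)
    (fun z _ => laplacian_comp_add_left.trans_le (hΔ _)) (smul_ne_zero hk.1.ne' hx) ?_
  rw [norm_smul, Real.norm_of_nonneg hk.1.le]
  exact mul_le_of_le_one_left (norm_nonneg x) hk.2.le

section BallMean

variable [MeasurableSpace E] [BorelSpace E] {c ρ : ℝ}

lemma integrableOn_closedBall (hf : Continuous f) : IntegrableOn f (closedBall x ρ) :=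
  hf.continuousOn.integrableOn_compact (isCompact_closedBall x ρ)

lemma setIntegral_sphericalMean_closedBall (hf : Continuous f) :
    ∫ x in closedBall (0 : E) ρ, sphericalMean f x = ∫ x in closedBall (0 : E) ρ, f x := by
  have hint : Integrable (fun q : E × unitary (E →L[ℝ] E) => f ((q.2 : E →L[ℝ] E) q.1))
      ((volume.restrict (closedBall (0 : E) ρ)).prod (orthogonalHaar E)) := by
    rw [← Measure.restrict_univ (μ := orthogonalHaar E), Measure.prod_restrict]
    exact ContinuousOn.integrableOn_compact ((isCompact_closedBall 0 ρ).prod isCompact_univ)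
      (by fun_prop)
  have hrot (R : unitary (E →L[ℝ] E)) :
      ∫ x in closedBall (0 : E) ρ, f ((R : E →L[ℝ] E) x) = ∫ x in closedBall (0 : E) ρ, f x := by
    set S := Unitary.linearIsometryEquiv R
    have h := S.measurePreserving.setIntegral_preimage_emb
      S.toHomeomorph.measurableEmbedding f (closedBall 0 ρ)
    rwa [S.preimage_closedBall, map_zero] at h
  unfold sphericalMean
  rw [integral_integral_swap (f := fun x (R : unitary (E →L[ℝ] E)) => f ((R : E →L[ℝ] E) x)) hint]
  simp [hrot]

lemma setIntegral_closedBall_le (hd : 3 ≤ finrank ℝ E) (hg : ContDiff ℝ 2 g)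
    (hg0 : ∀ x, 0 ≤ g x) (hΔ : ∀ x, Δ g x ≤ 0) (y : E) :
    ∫ x in closedBall y ρ, g x ≤ volume.real (closedBall (0 : E) ρ) * g y := by
  have hgy : Continuous fun z => g (y + z) := by fun_prop
  have htranslate : ∫ x in closedBall (0 : E) ρ, g (y + x) = ∫ x in closedBall y ρ, g x := by
    have h := (measurePreserving_add_left (volume : Measure E) y).setIntegral_preimage_emb
      (measurableEmbedding_addLeft y) g (closedBall y ρ)
    rwa [preimage_add_closedBall, sub_self] at h
  calc ∫ x in closedBall y ρ, g x
      = ∫ x in closedBall (0 : E) ρ, sphericalMean (fun z => g (y + z)) x := by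
        rw [setIntegral_sphericalMean_closedBall hgy, htranslate]
    _ ≤ ∫ _ in closedBall (0 : E) ρ, g y :=
        integral_mono (integrableOn_closedBall (continuous_sphericalMean hgy))
          (integrableOn_closedBall continuous_const)
          fun x => sphericalMean_comp_add_left_le hd hg hg0 hΔ x y
    _ = volume.real (closedBall (0 : E) ρ) * g y := by rw [setIntegral_const, smul_eq_mul]

lemma mul_le_setIntegral_closedBall (hg : Continuous g) (hg0 : ∀ x, 0 ≤ g x) (hρ : 1 ≤ ρ)
    (hc : ∀ x : E, 1 ≤ ‖x‖ → ‖x‖ ≤ ρ → c ≤ sphericalMean g x) :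
    (volume.real (closedBall (0 : E) ρ) - volume.real (ball (0 : E) 1)) * c ≤
      ∫ x in closedBall (0 : E) ρ, g x := by
  have hsub : ball (0 : E) 1 ⊆ closedBall 0 ρ :=
    ball_subset_closedBall.trans (closedBall_subset_closedBall hρ)
  have hint : IntegrableOn (sphericalMean g) (closedBall 0 ρ) :=
    integrableOn_closedBall (continuous_sphericalMean hg)
  calc (volume.real (closedBall (0 : E) ρ) - volume.real (ball (0 : E) 1)) * c
      = ∫ _x in closedBall (0 : E) ρ \ ball 0 1, c := by
        rw [setIntegral_const, smul_eq_mul,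
          measureReal_sdiff hsub measurableSet_ball measure_closedBall_lt_top.ne]
    _ ≤ ∫ x in closedBall (0 : E) ρ \ ball 0 1, sphericalMean g x := by
        refine setIntegral_mono_on
          ((integrableOn_closedBall continuous_const).mono_set sdiff_subset)
          (hint.mono_set sdiff_subset) (measurableSet_closedBall.diff measurableSet_ball) ?_
        rintro x ⟨hxρ, hx1⟩
        exact hc x (by simpa using hx1) (by simpa using hxρ)
    _ ≤ ∫ x in closedBall (0 : E) ρ, sphericalMean g x :=
        setIntegral_mono_set hint (.of_forall fun x => integral_nonneg fun R => hg0 _)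
          sdiff_subset.eventuallyLE
    _ = ∫ x in closedBall (0 : E) ρ, g x := setIntegral_sphericalMean_closedBall hg

end BallMean

lemma mul_pow_sub_one_le (hd : 3 ≤ finrank ℝ E) (hg : ContDiff ℝ 2 g)
    (hg0 : ∀ x, 0 ≤ g x) (hΔ : ∀ x, Δ g x ≤ 0) {c ρ : ℝ} (hρ : 1 ≤ ρ)
    (hc : ∀ x : E, 1 ≤ ‖x‖ → ‖x‖ ≤ ρ → c ≤ sphericalMean g x) (y : E) :
    (ρ ^ finrank ℝ E - 1) * c ≤ (ρ + ‖y‖) ^ finrank ℝ E * g y := by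
  borelize E
  have hvol {r : ℝ} (hr : 0 ≤ r) : volume.real (closedBall (0 : E) r) =
      r ^ finrank ℝ E * volume.real (ball (0 : E) 1) := Measure.addHaar_real_closedBall _ 0 hr
  have hV : 0 < volume.real (ball (0 : E) 1) := 
    ENNReal.toReal_pos (measure_ball_pos _ _ one_pos).ne' measure_ball_lt_top.ne
  have hlower := mul_le_setIntegral_closedBall hg.continuous hg0 hρ hc
  have hmono : ∫ x in closedBall (0 : E) ρ, g x ≤ ∫ x in closedBall y (ρ + ‖y‖), g x :=
    setIntegral_mono_set (integrableOn_closedBall hg.continuous) (.of_forall hg0)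
      (closedBall_subset_closedBall' (by simp)).eventuallyLE
  have hupper := setIntegral_closedBall_le hd hg hg0 hΔ y (ρ := ρ + ‖y‖)
  rw [hvol (by linarith)] at hlower
  rw [hvol (by positivity)] at hupper
  refine le_of_mul_le_mul_right ?_ hV
  linarith

end Superharmonic

section Truncation

variable {A s : ℝ}

/-- A smooth concave function that is the identity below `A` and constant above `2 * A`. Composing
a positive superharmonic function with it keeps it superharmonic and removes its pole. -/
noncomputable def truncation (A s : ℝ) : ℝ :=
  ∫ x in (0 : ℝ)..s, Real.smoothTransition (2 - x / A)

lemma continuous_smoothTransition_comp : Continuous fun x => Real.smoothTransition (2 - x / A) :=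
  Real.smoothTransition.continuous.comp (by fun_prop)

lemma deriv_truncation : deriv (truncation A) = fun s => Real.smoothTransition (2 - s / A) :=
  funext fun s => continuous_smoothTransition_comp.deriv_integral _ 0 s

lemma contDiff_truncation : ContDiff ℝ 2 (truncation A) := by
  rw [show (2 : WithTop ℕ∞) = 1 + 1 from rfl, contDiff_succ_iff_deriv, deriv_truncation]
  exact ⟨fun s => (continuous_smoothTransition_comp.integral_hasStrictDerivAt 0
    s).hasDerivAt.differentiableAt, by simp, Real.smoothTransition.contDiff.comp (by fun_prop)⟩

lemma deriv_truncation_nonneg : 0 ≤ deriv (truncation A) s := by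
  rw [deriv_truncation]
  exact Real.smoothTransition.nonneg _

lemma truncation_nonneg (hs : 0 ≤ s) : 0 ≤ truncation A s :=
  intervalIntegral.integral_nonneg hs fun _ _ => Real.smoothTransition.nonneg _

variable (hA : 0 < A)
include hA

lemma deriv2_truncation_nonpos : deriv^[2] (truncation A) s ≤ 0 := by
  have hanti : Antitone fun s => Real.smoothTransition (2 - s / A) := fun s t hst =>
    Real.smoothTransition.monotone (by gcongr)
  change deriv (deriv (truncation A)) s ≤ 0
  rw [deriv_truncation]
  exact hanti.deriv_nonpos

lemma truncation_of_le (hs : s ≤ A) : truncation A s = s := by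
  have hone : EqOn (fun x => Real.smoothTransition (2 - x / A)) (fun _ => 1) (uIcc 0 s) := by
    intro x hx
    have hxA : x / A ≤ 1 := (div_le_one hA).mpr (hx.2.trans (sup_le hA.le hs))
    exact Real.smoothTransition.one_of_one_le (by linarith)
  rw [truncation, intervalIntegral.integral_congr hone]
  simp

lemma truncation_of_ge (hs : 2 * A ≤ s) : truncation A s = truncation A (2 * A) := by
  have hzero : EqOn (fun x => Real.smoothTransition (2 - x / A)) 0 (uIcc (2 * A) s) := by
    intro x hx
    rw [uIcc_of_le hs] at hx
    have hxA : 2 ≤ x / A := (le_div_iff₀ hA).mpr hx.1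
    exact Real.smoothTransition.zero_of_nonpos (by linarith)
  rw [truncation, ← intervalIntegral.integral_add_adjacent_intervals
    (continuous_smoothTransition_comp.intervalIntegrable 0 (2 * A))
    (continuous_smoothTransition_comp.intervalIntegrable _ _),
    intervalIntegral.integral_congr hzero]
  simp [truncation]

end Truncation

section PosSuperharmonic

variable {E : Type*} [NormedAddCommGroup E] [InnerProductSpace ℝ E] [FiniteDimensional ℝ E]
  {u v : E → ℝ} {x y : E} {c : ℝ}

/-- A positive superharmonic `C²` function on the punctured space. -/
structure IsPosSuperharmonic (u : E → ℝ) : Prop where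
  contDiffOn : ContDiffOn ℝ 2 u {0}ᶜ
  pos : ∀ x ≠ 0, 0 < u x
  laplacian_nonpos : ∀ x ≠ 0, Δ u x ≤ 0

namespace IsPosSuperharmonic

lemma contDiffAt (hu : IsPosSuperharmonic u) (hx : x ≠ 0) : ContDiffAt ℝ 2 u x :=
  hu.contDiffOn.contDiffAt (isOpen_compl_singleton.mem_nhds hx)

lemma continuousOn (hu : IsPosSuperharmonic u) : ContinuousOn u {0}ᶜ := hu.contDiffOn.continuousOn

lemma add_const_smul_newtonKernel (hu : IsPosSuperharmonic u) {ε : ℝ} (hε : 0 < ε) :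
    IsPosSuperharmonic (u + ε • newtonKernel) := by
  have hε' {x : E} (hx : x ≠ 0) : ContDiffAt ℝ 2 (ε • newtonKernel) x :=
    (contDiffAt_newtonKernel hx).const_smul ε
  refine ⟨fun x hx => ((hu.contDiffAt hx).add (hε' hx)).contDiffWithinAt,
    fun x hx => add_pos (hu.pos x hx) (mul_pos hε (newtonKernel_pos hx)), fun x hx => ?_⟩
  rw [(hu.contDiffAt hx).laplacian_add (hε' hx),
    InnerProductSpace.laplacian_smul _ (contDiffAt_newtonKernel hx), laplacian_newtonKernel hx]
  simpa using hu.laplacian_nonpos x hx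

lemma laplacian_truncation_comp_nonpos (hv : IsPosSuperharmonic v) {A : ℝ} (hA : 0 < A)
    (hx : x ≠ 0) : Δ (truncation A ∘ v) x ≤ 0 := by
  rw [laplacian_comp_real contDiff_truncation.contDiffAt (hv.contDiffAt hx)]
  exact add_nonpos
    (mul_nonpos_of_nonpos_of_nonneg (deriv2_truncation_nonpos hA) (sq_nonneg _))
    (mul_nonpos_of_nonneg_of_nonpos deriv_truncation_nonneg (hv.laplacian_nonpos x hx))

lemma exists_truncation (hv : IsPosSuperharmonic v) (hpole : Tendsto v (𝓝[≠] 0) atTop)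
    {K : Set E} (hK : IsCompact K) (hK0 : (0 : E) ∉ K) :
    ∃ g : E → ℝ, ContDiff ℝ 2 g ∧ (∀ x, 0 ≤ g x) ∧ (∀ x, Δ g x ≤ 0) ∧ EqOn g v K := by
  obtain ⟨A, hA, hKA⟩ : ∃ A > 0, ∀ x ∈ K, v x ≤ A := by
    obtain ⟨A, hA⟩ := hK.bddAbove_image (hv.continuousOn.mono (subset_compl_singleton_iff.mpr hK0))
    exact ⟨max A 1, by positivity, fun x hx => (hA (mem_image_of_mem v hx)).trans (le_max_left ..)⟩
  classical
  set g : E → ℝ := Function.update (truncation A ∘ v) 0 (truncation A (2 * A))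
  have hg {x : E} (hx : x ≠ 0) : g x = truncation A (v x) := Function.update_of_ne hx ..
  have hg_ne {x : E} (hx : x ≠ 0) : g =ᶠ[𝓝 x] truncation A ∘ v := by
    filter_upwards [isOpen_compl_singleton.mem_nhds hx] with z hz using hg hz
  have hg_zero : g =ᶠ[𝓝 0] fun _ => truncation A (2 * A) := by
    filter_upwards [eventually_nhdsWithin_iff.mp (hpole.eventually_ge_atTop (2 * A))] with z hz
    rcases eq_or_ne z 0 with rfl | hz0
    · exact Function.update_self ..
    · rw [hg hz0, truncation_of_ge hA (hz hz0)]
  refine ⟨g, contDiff_iff_contDiffAt.mpr fun x => ?_, fun x => ?_, fun x => ?_, fun x hx => ?_⟩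
  · rcases eq_or_ne x 0 with rfl | hx
    · exact contDiffAt_const.congr_of_eventuallyEq hg_zero
    · exact (contDiff_truncation.contDiffAt.comp x (hv.contDiffAt hx)).congr_of_eventuallyEq
        (hg_ne hx)
  · rcases eq_or_ne x 0 with rfl | hx
    · exact hg_zero.eq_of_nhds ▸ truncation_nonneg (by positivity)
    · exact hg hx ▸ truncation_nonneg (hv.pos x hx).le
  · rcases eq_or_ne x 0 with rfl | hx
    · rw [(InnerProductSpace.laplacian_congr_nhds hg_zero).eq_of_nhds]
      simp
    · rw [(InnerProductSpace.laplacian_congr_nhds (hg_ne hx)).eq_of_nhds]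
      exact hv.laplacian_truncation_comp_nonpos hA hx
  · rw [hg (ne_of_mem_of_not_mem hx hK0), truncation_of_le hA (hKA x hx)]

lemma mul_pow_sub_one_le (hv : IsPosSuperharmonic v) (hd : 3 ≤ finrank ℝ E)
    (hpole : Tendsto v (𝓝[≠] 0) atTop) (hc : ∀ x ≠ 0, c ≤ sphericalMean v x) (hy : y ≠ 0)
    {ρ : ℝ} (hρ : 1 ≤ ρ) :
    (ρ ^ finrank ℝ E - 1) * c ≤ (ρ + ‖y‖) ^ finrank ℝ E * v y := by
  obtain ⟨g, hg, hg0, hΔ, hgv⟩ := hv.exists_truncation hpole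
    (K := insert y (closedBall 0 ρ \ ball 0 1))
    (((isCompact_closedBall 0 ρ).diff isOpen_ball).insert y) (by simp [hy.symm])
  rw [← hgv (mem_insert ..)]
  refine _root_.mul_pow_sub_one_le hd hg hg0 hΔ hρ (fun x hx1 hxρ => ?_) y
  have hx : x ≠ 0 := norm_pos_iff.mp (one_pos.trans_le hx1)
  rw [sphericalMean_congr (h := v) fun z hz => hgv <| mem_insert_of_mem y (by simp [hz, hx1, hxρ])]
  exact hc x hx

lemma le_of_forall_le_sphericalMean_of_pole (hv : IsPosSuperharmonic v) (hd : 3 ≤ finrank ℝ E)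
    (hpole : Tendsto v (𝓝[≠] 0) atTop) (hc : ∀ x ≠ 0, c ≤ sphericalMean v x) (hy : y ≠ 0) :
    c ≤ v y := by
  have hscaled : ∀ᶠ ρ : ℝ in atTop,
      (1 - ρ⁻¹ ^ finrank ℝ E) * c ≤ (1 + ρ⁻¹ * ‖y‖) ^ finrank ℝ E * v y := by
    filter_upwards [eventually_ge_atTop 1] with ρ hρ
    have hρ0 : ρ ≠ 0 := by positivity
    have h := mul_le_mul_of_nonneg_left (hv.mul_pow_sub_one_le hd hpole hc hy hρ)
      (show 0 ≤ ρ⁻¹ ^ finrank ℝ E by positivity)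
    rwa [← mul_assoc, ← mul_assoc, mul_sub, ← mul_pow, ← mul_pow, inv_mul_cancel₀ hρ0, one_pow,
      mul_one, mul_add, inv_mul_cancel₀ hρ0] at h
  have hlim (F : ℝ → ℝ) (hF : Continuous F) : Tendsto (fun ρ : ℝ => F ρ⁻¹) atTop (𝓝 (F 0)) :=
    (hF.tendsto 0).comp tendsto_inv_atTop_zero
  have h := le_of_tendsto_of_tendsto (hlim (fun r => (1 - r ^ finrank ℝ E) * c) (by fun_prop))
    (hlim (fun r => (1 + r * ‖y‖) ^ finrank ℝ E * v y) (by fun_prop)) hscaled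
  simpa [show finrank ℝ E ≠ 0 by omega] using h

lemma le_of_forall_le_sphericalMean (hu : IsPosSuperharmonic u) (hd : 3 ≤ finrank ℝ E)
    (hc : ∀ x ≠ 0, c ≤ sphericalMean u x) (hy : y ≠ 0) : c ≤ u y := by
  have hε (ε : ℝ) (hε : 0 < ε) : c ≤ u y + ε * newtonKernel y := by
    have hv := hu.add_const_smul_newtonKernel hε
    have hle {x : E} (hx : x ≠ 0) : ε * newtonKernel x ≤ (u + ε • newtonKernel : E → ℝ) x := by
      simpa using (hu.pos x hx).le
    refine hv.le_of_forall_le_sphericalMean_of_pole hd ?_ (fun x hx => ?_) hy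
    · exact tendsto_atTop_mono' _ (eventually_nhdsWithin_of_forall fun x hx => hle hx)
        ((tendsto_newtonKernel_nhdsNE_zero hd).const_mul_atTop hε)
    · refine (hc x hx).trans (sphericalMean_mono hu.continuousOn hv.continuousOn hx fun z hz => ?_)
      have hz0 : z ≠ 0 := norm_pos_iff.mp (hz ▸ norm_pos_iff.mpr hx)
      simpa using (mul_pos hε (newtonKernel_pos hz0)).le
  have hlim : Tendsto (fun ε => u y + ε * newtonKernel y) (𝓝[>] 0) (𝓝 (u y)) := by
    have h : Continuous fun ε : ℝ => u y + ε * newtonKernel y := by fun_prop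
    simpa using (h.tendsto 0).mono_left nhdsWithin_le_nhds
  exact ge_of_tendsto hlim (eventually_nhdsWithin_of_forall hε)

end IsPosSuperharmonic

end PosSuperharmonic

section Kelvin

variable {E : Type*} [NormedAddCommGroup E] [InnerProductSpace ℝ E] [FiniteDimensional ℝ E]
  {u g : E → ℝ} {x : E} {t c : ℝ}

lemma inversion_unitary_apply (R : unitary (E →L[ℝ] E)) (x : E) :
    EuclideanGeometry.inversion 0 1 ((R : E →L[ℝ] E) x) =
      (R : E →L[ℝ] E) (EuclideanGeometry.inversion 0 1 x) := by
  simp [EuclideanGeometry.inversion, norm_unitary_apply]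

lemma kelvinTransform_unitary_apply (R : unitary (E →L[ℝ] E)) (x : E) :
    kelvinTransform g ((R : E →L[ℝ] E) x) =
      newtonKernel x * g ((R : E →L[ℝ] E) (EuclideanGeometry.inversion 0 1 x)) := by
  rw [kelvinTransform, newtonKernel, norm_unitary_apply, inversion_unitary_apply, newtonKernel]

lemma sphericalMean_kelvinTransform :
    sphericalMean (kelvinTransform g) x =
      newtonKernel x * sphericalMean g (EuclideanGeometry.inversion 0 1 x) := by
  simp only [sphericalMean, kelvinTransform_unitary_apply, integral_const_mul]

lemma meanProfile_kelvinTransform (hd : 3 ≤ finrank ℝ E) (ht : 0 < t) :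
    meanProfile (kelvinTransform g) t = t * meanProfile g t⁻¹ := by
  have hx : (newtonPoint t : E) ≠ 0 := newtonPoint_ne_zero hd ht
  rw [meanProfile, sphericalMean_kelvinTransform,
    ← meanProfile_newtonKernel hd (inversion_zero_one_ne_zero hx), newtonKernel_inversion,
    newtonKernel_newtonPoint hd ht]

lemma IsPosSuperharmonic.kelvinTransform (hu : IsPosSuperharmonic u) :
    IsPosSuperharmonic (kelvinTransform u) := by
  refine ⟨fun x hx => (contDiffAt_kelvinTransform hu.contDiffOn hx).contDiffWithinAt,
    fun x hx => mul_pos (newtonKernel_pos hx) (hu.pos _ (inversion_zero_one_ne_zero hx)),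
    fun x hx => ?_⟩
  rw [laplacian_kelvinTransform hu.contDiffOn hx]
  exact mul_nonpos_of_nonneg_of_nonpos (mul_nonneg (newtonKernel_pos hx).le (by positivity))
    (hu.laplacian_nonpos _ (inversion_zero_one_ne_zero hx))

end Kelvin

section Oscillation

variable {E : Type*} [NormedAddCommGroup E] [InnerProductSpace ℝ E] [FiniteDimensional ℝ E]
  {u : E → ℝ} {x : E} {t c : ℝ} (S : unitary (E →L[ℝ] E))

lemma continuousOn_comp_unitary_apply (hu : ContinuousOn u {0}ᶜ) :
    ContinuousOn (fun z => u ((S : E →L[ℝ] E) z)) {0}ᶜ :=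
  hu.comp (by fun_prop) fun _ hz => unitary_apply_ne_zero S hz

/-- How far `u` is from being invariant under the rotation `S`. -/
def rotationDefect (u : E → ℝ) (z : E) : ℝ := u z - u ((S : E →L[ℝ] E) z)

lemma continuousOn_rotationDefect (hu : ContinuousOn u {0}ᶜ) :
    ContinuousOn (rotationDefect S u) {0}ᶜ :=
  hu.sub (continuousOn_comp_unitary_apply S hu)

lemma kelvinTransform_abs_rotationDefect :
    kelvinTransform (fun z => |rotationDefect S u z|) =
      fun z => |rotationDefect S (kelvinTransform u) z| := by
  funext x
  have hx : 0 ≤ newtonKernel x := by unfold newtonKernel; positivity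
  rw [rotationDefect, kelvinTransform_unitary_apply, kelvinTransform, kelvinTransform,
    ← mul_sub, abs_mul, abs_of_nonneg hx, rotationDefect]

lemma sphericalMean_abs_rotationDefect_le (hu : ContinuousOn u {0}ᶜ) (hx : x ≠ 0)
    (hc : ∀ y, ‖y‖ = ‖x‖ → c ≤ u y) :
    sphericalMean (fun z => |rotationDefect S u z|) x ≤ 2 * (sphericalMean u x - c) := by
  have huS := continuousOn_comp_unitary_apply S hu
  have hsum : ContinuousOn (fun z => u z + u ((S : E →L[ℝ] E) z)) {0}ᶜ := hu.add huS
  calc sphericalMean (fun z => |rotationDefect S u z|) x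
      ≤ sphericalMean (fun z => u z + u ((S : E →L[ℝ] E) z) + -(2 * c)) x := by
        refine sphericalMean_mono (continuousOn_rotationDefect S hu).abs
          (hsum.add continuousOn_const) hx fun z hz => ?_
        have hz' := hc z hz
        have hSz := hc _ ((norm_unitary_apply S z).trans hz)
        rw [rotationDefect, abs_sub_le_iff]
        constructor <;> linarith
    _ = 2 * (sphericalMean u x - c) := by
        rw [sphericalMean_add hsum continuousOn_const hx, sphericalMean_add hu huS hx,
          sphericalMean_const]
        have h : sphericalMean (fun z => u ((S : E →L[ℝ] E) z)) x = sphericalMean u x :=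
          sphericalMean_comp_unitary S
        rw [h]
        ring

namespace IsPosSuperharmonic

variable (hu : IsPosSuperharmonic u) (hd : 3 ≤ finrank ℝ E)
include hu hd

lemma meanProfile_nonneg (ht : 0 < t) : 0 ≤ meanProfile u t :=
  integral_nonneg fun R => (hu.pos _ (unitary_apply_ne_zero R (newtonPoint_ne_zero hd ht))).le

lemma exists_tendsto_meanProfile :
    ∃ c, Tendsto (meanProfile u) (𝓝[>] 0) (𝓝 c) ∧ ∀ t > 0, c ≤ meanProfile u t := by
  have hmono : MonotoneOn (meanProfile u) (Ioi 0) := monotoneOn_of_concaveOn_nonneg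
    (concaveOn_meanProfile hd hu.contDiffOn hu.laplacian_nonpos)
    fun t ht => hu.meanProfile_nonneg hd ht
  have hbdd : BddBelow (meanProfile u '' Ioi 0) :=
    ⟨0, forall_mem_image.mpr fun t ht => hu.meanProfile_nonneg hd ht⟩
  exact ⟨_, hmono.tendsto_nhdsGT hbdd, fun t ht => csInf_le hbdd (mem_image_of_mem _ ht)⟩

lemma tendsto_meanProfile_abs_rotationDefect :
    Tendsto (meanProfile fun z => |rotationDefect S u z|) (𝓝[>] 0) (𝓝 0) := by
  obtain ⟨c, hc, hle⟩ := hu.exists_tendsto_meanProfile hd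
  have hcu {y : E} (hy : y ≠ 0) : c ≤ u y := hu.le_of_forall_le_sphericalMean hd
    (fun x hx => meanProfile_newtonKernel hd hx ▸ hle _ (newtonKernel_pos hx)) hy
  have hlim : Tendsto (fun t => 2 * (meanProfile u t - c)) (𝓝[>] 0) (𝓝 0) := by
    simpa using (hc.sub_const c).const_mul 2
  refine squeeze_zero' (.of_forall fun t => integral_nonneg fun R => abs_nonneg _) ?_ hlim
  filter_upwards [self_mem_nhdsWithin] with t ht
  have hx : (newtonPoint t : E) ≠ 0 := newtonPoint_ne_zero hd ht
  exact sphericalMean_abs_rotationDefect_le S hu.continuousOn hx fun y hy =>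
    hcu (norm_pos_iff.mp (hy ▸ norm_pos_iff.mpr hx))

lemma tendsto_meanProfile_abs_rotationDefect_div :
    Tendsto (fun t => meanProfile (fun z => |rotationDefect S u z|) t / t) atTop (𝓝 0) := by
  have h := (hu.kelvinTransform.tendsto_meanProfile_abs_rotationDefect S hd).comp
    tendsto_inv_atTop_nhdsGT_zero
  refine h.congr' ?_
  filter_upwards [eventually_gt_atTop 0] with t ht
  rw [Function.comp_apply, ← kelvinTransform_abs_rotationDefect,
    meanProfile_kelvinTransform hd (inv_pos.mpr ht), inv_inv, inv_mul_eq_div]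

end IsPosSuperharmonic

end Oscillation

/-! ### Radial symmetry -/

section SmoothAbs

/-- A smooth convex substitute for the absolute value. -/
noncomputable def smoothAbs (s : ℝ) : ℝ := √(1 + s ^ 2) - 1

variable {s : ℝ}

lemma contDiff_smoothAbs : ContDiff ℝ 2 smoothAbs :=
  (ContDiff.sqrt (by fun_prop) fun s => by positivity).sub contDiff_const

lemma smoothAbs_nonneg : 0 ≤ smoothAbs s :=
  sub_nonneg.mpr <| Real.one_le_sqrt.mpr (by nlinarith)

lemma smoothAbs_le_abs : smoothAbs s ≤ |s| := by
  rw [smoothAbs, sub_le_iff_le_add, Real.sqrt_le_iff]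
  exact ⟨by positivity, by nlinarith [sq_abs s, abs_nonneg s]⟩

lemma eq_zero_of_smoothAbs_eq_zero (h : smoothAbs s = 0) : s = 0 := by
  rwa [smoothAbs, sub_eq_zero, Real.sqrt_eq_one, add_eq_left, sq_eq_zero_iff] at h

lemma deriv_smoothAbs : deriv smoothAbs = fun s => Real.sin (Real.arctan s) := by
  funext s
  have h : HasDerivAt (fun s : ℝ => 1 + s ^ 2) (2 * s) s := by
    simpa using (hasDerivAt_pow 2 s).const_add 1
  have h' := (h.sqrt (by positivity)).sub_const 1
  rw [Real.sin_arctan]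
  refine (h'.congr_deriv ?_).deriv
  field_simp

lemma monotone_deriv_smoothAbs : Monotone (deriv smoothAbs) := by
  rw [deriv_smoothAbs]
  exact fun s t hst => Real.strictMonoOn_sin.monotoneOn
    ⟨(Real.neg_pi_div_two_lt_arctan s).le, (Real.arctan_lt_pi_div_two s).le⟩
    ⟨(Real.neg_pi_div_two_lt_arctan t).le, (Real.arctan_lt_pi_div_two t).le⟩
    (Real.arctan_strictMono.monotone hst)

lemma deriv_smoothAbs_zero : deriv smoothAbs 0 = 0 := by
  simp [deriv_smoothAbs]

end SmoothAbs

lemma eq_zero_of_convexOn_Ioi {m : ℝ → ℝ} (hm : ConvexOn ℝ (Ioi 0) m) (hm0 : ∀ t > 0, 0 ≤ m t)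
    (hzero : Tendsto m (𝓝[>] 0) (𝓝 0)) (htop : Tendsto (fun t => m t / t) atTop (𝓝 0))
    {t : ℝ} (ht : 0 < t) : m t = 0 := by
  have hslope {T : ℝ} (hT : t < T) : m t / t ≤ m T / T := by
    have hlim {r : ℝ} (hr : 0 < r) :
        Tendsto (fun s => (m r - m s) / (r - s)) (𝓝[>] 0) (𝓝 (m r / r)) := by
      have hs : Tendsto (fun s => r - s) (𝓝[>] 0) (𝓝 (r - 0)) :=
        (tendsto_id.mono_left nhdsWithin_le_nhds).const_sub r
      have h := (hzero.const_sub (m r)).div hs (by simpa using hr.ne')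
      rwa [sub_zero, sub_zero] at h
    refine le_of_tendsto_of_tendsto (hlim ht) (hlim (ht.trans hT)) ?_
    filter_upwards [Ioo_mem_nhdsGT ht] with s hs
    exact hm.secant_mono hs.1 ht (ht.trans hT) hs.2.ne' (hs.2.trans hT).ne' hT.le
  have hle : m t / t ≤ 0 :=
    ge_of_tendsto htop ((eventually_gt_atTop t).mono fun T hT => hslope hT)
  exact le_antisymm (by simpa using (div_le_iff₀ ht).mp hle) (hm0 t ht)

section Symmetry

variable {E : Type*} [NormedAddCommGroup E] [InnerProductSpace ℝ E]
  {f : ℝ → ℝ → ℝ} {u : E → ℝ} {x y : E}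

/-- A positive `C²` solution of `-Δu = f(|x|, u)` on the punctured space. -/
structure IsPosSolution [FiniteDimensional ℝ E] (f : ℝ → ℝ → ℝ) (u : E → ℝ) : Prop where
  contDiffOn : ContDiffOn ℝ 2 u {0}ᶜ
  pos : ∀ x ≠ 0, 0 < u x
  neg_laplacian : ∀ x ≠ 0, -Δ u x = f ‖x‖ (u x)

variable [FiniteDimensional ℝ E]

namespace IsPosSolution

lemma laplacian_eq (hu : IsPosSolution f u) (hx : x ≠ 0) : Δ u x = -f ‖x‖ (u x) := by
  rw [← hu.neg_laplacian x hx, neg_neg]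

lemma isPosSuperharmonic (hu : IsPosSolution f u) (hf0 : ∀ r > 0, ∀ s > 0, 0 ≤ f r s) :
    IsPosSuperharmonic u where
  contDiffOn := hu.contDiffOn
  pos := hu.pos
  laplacian_nonpos x hx := by
    rw [hu.laplacian_eq hx]
    exact neg_nonpos.mpr (hf0 _ (norm_pos_iff.mpr hx) _ (hu.pos x hx))

variable (S : unitary (E →L[ℝ] E))

lemma contDiffAt_comp_unitary (hu : IsPosSolution f u) (hx : x ≠ 0) :
    ContDiffAt ℝ 2 (fun z => u ((S : E →L[ℝ] E) z)) x :=
  (hu.contDiffOn.contDiffAt (isOpen_compl_singleton.mem_nhds (unitary_apply_ne_zero S hx))).comp x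
    (S : E →L[ℝ] E).contDiff.contDiffAt

lemma contDiffAt_rotationDefect (hu : IsPosSolution f u) (hx : x ≠ 0) :
    ContDiffAt ℝ 2 (rotationDefect S u) x :=
  (hu.contDiffOn.contDiffAt (isOpen_compl_singleton.mem_nhds hx)).sub
    (hu.contDiffAt_comp_unitary S hx)

lemma laplacian_rotationDefect (hu : IsPosSolution f u) (hx : x ≠ 0) :
    Δ (rotationDefect S u) x = f ‖x‖ (u ((S : E →L[ℝ] E) x)) - f ‖x‖ (u x) := by
  have hSx := unitary_apply_ne_zero S hx
  have hsub : Δ (rotationDefect S u) x = Δ u x - Δ (fun z => u ((S : E →L[ℝ] E) z)) x :=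
    (hu.contDiffOn.contDiffAt (isOpen_compl_singleton.mem_nhds hx)).laplacian_sub
      (hu.contDiffAt_comp_unitary S hx)
  have hS : Δ (fun z => u ((S : E →L[ℝ] E) z)) x = Δ u ((S : E →L[ℝ] E) x) :=
    laplacian_comp_linearIsometryEquiv (Unitary.linearIsometryEquiv S)
      (hu.contDiffOn.contDiffAt (isOpen_compl_singleton.mem_nhds hSx))
  rw [hsub, hS, hu.laplacian_eq hx, hu.laplacian_eq hSx, norm_unitary_apply]
  ring

lemma laplacian_smoothAbs_rotationDefect_nonneg (hu : IsPosSolution f u)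
    (hf : ∀ r > 0, AntitoneOn (f r) (Ioi 0)) (hx : x ≠ 0) :
    0 ≤ Δ (smoothAbs ∘ rotationDefect S u) x := by
  have hanti := hf _ (norm_pos_iff.mpr hx)
  have hpos := hu.pos x hx
  have hSpos := hu.pos _ (unitary_apply_ne_zero S hx)
  rw [laplacian_comp_real contDiff_smoothAbs.contDiffAt (hu.contDiffAt_rotationDefect S hx),
    hu.laplacian_rotationDefect S hx]
  refine add_nonneg (mul_nonneg monotone_deriv_smoothAbs.deriv_nonneg (sq_nonneg _)) ?_
  rcases le_total (u x) (u ((S : E →L[ℝ] E) x)) with h | h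
  · refine mul_nonneg_of_nonpos_of_nonpos ?_ (sub_nonpos.mpr (hanti hpos hSpos h))
    exact (monotone_deriv_smoothAbs (sub_nonpos.mpr h)).trans_eq deriv_smoothAbs_zero
  · refine mul_nonneg ?_ (sub_nonneg.mpr (hanti hSpos hpos h))
    exact deriv_smoothAbs_zero.symm.trans_le (monotone_deriv_smoothAbs (sub_nonneg.mpr h))

lemma sphericalMean_smoothAbs_rotationDefect (hu : IsPosSolution f u) (hd : 3 ≤ finrank ℝ E)
    (hf0 : ∀ r > 0, ∀ s > 0, 0 ≤ f r s) (hf : ∀ r > 0, AntitoneOn (f r) (Ioi 0)) (hx : x ≠ 0) :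
    sphericalMean (smoothAbs ∘ rotationDefect S u) x = 0 := by
  have hsup := hu.isPosSuperharmonic hf0
  have hdiff : ContDiffOn ℝ 2 (smoothAbs ∘ rotationDefect S u) {0}ᶜ := fun z hz =>
    (contDiff_smoothAbs.contDiffAt.comp z (hu.contDiffAt_rotationDefect S hz)).contDiffWithinAt
  have hnonneg (t : ℝ) : 0 ≤ meanProfile (smoothAbs ∘ rotationDefect S u) t :=
    integral_nonneg fun R => smoothAbs_nonneg
  have hle {t : ℝ} (ht : 0 < t) : meanProfile (smoothAbs ∘ rotationDefect S u) t ≤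
      meanProfile (fun z => |rotationDefect S u z|) t :=
    sphericalMean_mono hdiff.continuousOn (continuousOn_rotationDefect S hsup.continuousOn).abs
      (newtonPoint_ne_zero hd ht) fun z _ => smoothAbs_le_abs
  rw [← meanProfile_newtonKernel hd hx]
  refine eq_zero_of_convexOn_Ioi (convexOn_meanProfile hd hdiff fun z hz =>
    hu.laplacian_smoothAbs_rotationDefect_nonneg S hf hz) (fun t _ => hnonneg t) ?_ ?_
    (newtonKernel_pos hx)
  · exact squeeze_zero' (.of_forall hnonneg) (eventually_nhdsWithin_of_forall fun t ht => hle ht)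
      (hsup.tendsto_meanProfile_abs_rotationDefect S hd)
  · refine squeeze_zero' ?_ ?_ (hsup.tendsto_meanProfile_abs_rotationDefect_div S hd)
    · filter_upwards [eventually_gt_atTop 0] with t ht using div_nonneg (hnonneg t) ht.le
    · filter_upwards [eventually_gt_atTop 0] with t ht
      exact div_le_div_of_nonneg_right (hle ht) ht.le

theorem eq_of_norm_eq (hu : IsPosSolution f u) (hd : 3 ≤ finrank ℝ E)
    (hf0 : ∀ r > 0, ∀ s > 0, 0 ≤ f r s) (hf : ∀ r > 0, AntitoneOn (f r) (Ioi 0)) (hx : x ≠ 0)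
    (hxy : ‖x‖ = ‖y‖) : u x = u y := by
  obtain ⟨S, rfl⟩ := exists_unitary_apply_eq hxy
  have hcont : ContinuousOn (smoothAbs ∘ rotationDefect S u) {0}ᶜ :=
    contDiff_smoothAbs.continuous.comp_continuousOn
      (continuousOn_rotationDefect S hu.contDiffOn.continuousOn)
  have hzero := eq_zero_of_sphericalMean_eq_zero hcont hx (fun _ _ => smoothAbs_nonneg)
    (hu.sphericalMean_smoothAbs_rotationDefect S hd hf0 hf hx)
  exact sub_eq_zero.mp (eq_zero_of_smoothAbs_eq_zero hzero)

end IsPosSolution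

end Symmetry

/-! ### Emden–Fowler equations on the half-line -/

section GreenPotential

variable {q : ℝ → ℝ} {t : ℝ}

lemma integrableOn_Ioi_of_min_mul (hq : ContinuousOn q (Ioi 0))
    (hi : IntegrableOn (fun s => min s 1 * q s) (Ioi 0)) (ht : 0 < t) :
    IntegrableOn q (Ioi t) := by
  have hsub : Ioi t ⊆ Ioi 0 := Ioi_subset_Ioi ht.le
  refine Integrable.mono' ((hi.mono_set hsub).norm.const_mul (min t 1)⁻¹)
    ((hq.mono hsub).aestronglyMeasurable measurableSet_Ioi)
    (ae_restrict_of_forall_mem measurableSet_Ioi fun s (hs : t < s) => ?_)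
  have hmin : 0 < min t 1 := lt_min ht one_pos
  rw [norm_mul, Real.norm_of_nonneg (le_min (ht.trans hs).le zero_le_one), ← mul_assoc,
    ← div_eq_inv_mul]
  exact le_mul_of_one_le_left (norm_nonneg _)
    ((one_le_div hmin).mpr (min_le_min_right 1 hs.le))

lemma integrableOn_Ioc_mul_of_min_mul (hq : ContinuousOn q (Ioi 0))
    (hi : IntegrableOn (fun s => min s 1 * q s) (Ioi 0)) :
    IntegrableOn (fun s => s * q s) (Ioc 0 t) := by
  have hsub : Ioc 0 t ⊆ Ioi 0 := Ioc_subset_Ioi_self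
  refine Integrable.mono' ((hi.mono_set hsub).norm.const_mul (max t 1))
    (((continuousOn_id.mul hq).mono hsub).aestronglyMeasurable measurableSet_Ioc)
    (ae_restrict_of_forall_mem measurableSet_Ioc fun s hs => ?_)
  rw [norm_mul, norm_mul, Real.norm_of_nonneg hs.1.le,
    Real.norm_of_nonneg (le_min hs.1.le zero_le_one), ← mul_assoc]
  refine mul_le_mul_of_nonneg_right ?_ (norm_nonneg _)
  calc s = max s 1 * min s 1 := by rw [max_mul_min, mul_one]
    _ ≤ max t 1 * min s 1 :=
      mul_le_mul_of_nonneg_right (max_le_max_right 1 hs.2) (le_min hs.1.le zero_le_one)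

lemma hasDerivAt_integral_Ioi (hq : ContinuousOn q (Ioi 0))
    (hi : IntegrableOn (fun s => min s 1 * q s) (Ioi 0)) (ht : 0 < t) :
    HasDerivAt (fun t => ∫ s in Ioi t, q s) (-q t) t := by
  have hsplit : (fun t => ∫ s in Ioi t, q s) =ᶠ[𝓝 t]
      fun t => (∫ s in Ioi 1, q s) - ∫ s in 1..t, q s := by
    filter_upwards [lt_mem_nhds ht] with b hb
    exact eq_sub_of_add_eq' (intervalIntegral.integral_interval_add_Ioi
      (integrableOn_Ioi_of_min_mul hq hi one_pos) (integrableOn_Ioi_of_min_mul hq hi hb))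
  have hderiv : HasDerivAt (fun t => ∫ s in 1..t, q s) (q t) t :=
    intervalIntegral.integral_hasDerivAt_right
      (hq.mono fun s hs => (lt_min one_pos ht).trans_le hs.1).intervalIntegrable
      (hq.stronglyMeasurableAtFilter isOpen_Ioi t ht) (hq.continuousAt (Ioi_mem_nhds ht))
  exact (hderiv.const_sub _).congr_of_eventuallyEq hsplit

lemma integral_min_mul (hq : ContinuousOn q (Ioi 0))
    (hi : IntegrableOn (fun s => min s 1 * q s) (Ioi 0)) (ht : 0 < t) :
    ∫ s in Ioi 0, min s t * q s = (∫ s in 0..t, s * q s) + t * ∫ s in Ioi t, q s := by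
  have hlow : EqOn (fun s => s * q s) (fun s => min s t * q s) (Ioc 0 t) := fun s hs => by
    simp only [min_eq_left hs.2]
  have hhigh : EqOn (fun s => t * q s) (fun s => min s t * q s) (Ioi t) := fun s hs => by
    simp only [min_eq_right (mem_Ioi.mp hs).le]
  rw [← Ioc_union_Ioi_eq_Ioi ht.le, setIntegral_union Ioc_disjoint_Ioi_same measurableSet_Ioi
    ((integrableOn_Ioc_mul_of_min_mul hq hi).congr_fun hlow measurableSet_Ioc)
    (IntegrableOn.congr_fun ((integrableOn_Ioi_of_min_mul hq hi ht).const_mul t) hhigh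
      measurableSet_Ioi),
    intervalIntegral.integral_of_le ht.le, setIntegral_congr_fun measurableSet_Ioc hlow,
    ← integral_const_mul, setIntegral_congr_fun measurableSet_Ioi hhigh]

lemma hasDerivAt_integral_min_mul (hq : ContinuousOn q (Ioi 0))
    (hi : IntegrableOn (fun s => min s 1 * q s) (Ioi 0)) (ht : 0 < t) :
    HasDerivAt (fun t => ∫ s in Ioi 0, min s t * q s) (∫ s in Ioi t, q s) t := by
  have hsplit : (fun t => ∫ s in Ioi 0, min s t * q s) =ᶠ[𝓝 t]
      fun t => (∫ s in 0..t, s * q s) + t * ∫ s in Ioi t, q s := by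
    filter_upwards [lt_mem_nhds ht] with b hb using integral_min_mul hq hi hb
  have hcont : ContinuousOn (fun s => s * q s) (Ioi 0) := continuousOn_id.mul hq
  have hderiv : HasDerivAt (fun t => ∫ s in 0..t, s * q s) (t * q t) t :=
    intervalIntegral.integral_hasDerivAt_right
      ((intervalIntegrable_iff_integrableOn_Ioc_of_le ht.le).mpr
        (integrableOn_Ioc_mul_of_min_mul hq hi))
      (hcont.stronglyMeasurableAtFilter isOpen_Ioi t ht) (hcont.continuousAt (Ioi_mem_nhds ht))
  refine ((hderiv.add ((hasDerivAt_id t).mul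
    (hasDerivAt_integral_Ioi hq hi ht))).congr_of_eventuallyEq hsplit).congr_deriv ?_
  simp only [id_eq]
  ring

end GreenPotential

section Hammerstein

open BoundedContinuousFunction
open scoped NNReal

variable {X : Type*} [MeasurableSpace X] {μ : Measure X} {k : X → X → ℝ} {Ψ : X → ℝ} {g : ℝ → ℝ}
  {L : ℝ≥0}

lemma norm_hammerstein_le (hkΨ : ∀ t, ∀ᵐ s ∂μ, |k t s| ≤ Ψ s) (hg : ∀ z, |g z| ≤ 1) (y : X → ℝ)
    (t : X) : ∀ᵐ s ∂μ, ‖k t s * g (y s)‖ ≤ Ψ s := by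
  filter_upwards [hkΨ t] with s hs
  rw [norm_mul]
  exact (mul_le_of_le_one_right (norm_nonneg _) (hg _)).trans hs

variable [TopologicalSpace X] [OpensMeasurableSpace X]

lemma aestronglyMeasurable_hammerstein {y : X → ℝ} (hkm : ∀ t, AEStronglyMeasurable (k t) μ)
    (hgL : LipschitzWith L g) (hy : Continuous y) (t : X) :
    AEStronglyMeasurable (fun s => k t s * g (y s)) μ :=
  (hkm t).mul (hgL.continuous.comp hy).aestronglyMeasurable

lemma norm_integral_hammerstein_sub_le (hkm : ∀ t, AEStronglyMeasurable (k t) μ)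
    (hkΨ : ∀ t, ∀ᵐ s ∂μ, |k t s| ≤ Ψ s) (hΨ : Integrable Ψ μ) (hg : ∀ z, |g z| ≤ 1)
    (hgL : LipschitzWith L g) (y z : X →ᵇ ℝ) (t : X) :
    ‖(∫ s, k t s * g (y s) ∂μ) - ∫ s, k t s * g (z s) ∂μ‖ ≤ L * (∫ s, Ψ s ∂μ) * dist y z := by
  have hint (y : X →ᵇ ℝ) : Integrable (fun s => k t s * g (y s)) μ :=
    hΨ.mono' (aestronglyMeasurable_hammerstein hkm hgL y.continuous t)
      (norm_hammerstein_le hkΨ hg y t)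
  have hbound : ∀ᵐ s ∂μ, ‖k t s * g (y s) - k t s * g (z s)‖ ≤ L * dist y z * Ψ s := by
    filter_upwards [hkΨ t] with s hs
    rw [← mul_sub, norm_mul, ← dist_eq_norm (g (y s)), mul_comm]
    gcongr
    · exact (hgL.dist_le_mul _ _).trans (by gcongr; exact dist_coe_le_dist s)
    · exact hs
  rw [← integral_sub (hint y) (hint z)]
  refine (norm_integral_le_of_norm_le (hΨ.const_mul _) hbound).trans_eq ?_
  rw [integral_const_mul]
  ring

theorem exists_hammerstein_fixedPoint [FirstCountableTopology X] (c : ℝ)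
    (hkm : ∀ t, AEStronglyMeasurable (k t) μ) (hkc : ∀ᵐ s ∂μ, Continuous fun t => k t s)
    (hkΨ : ∀ t, ∀ᵐ s ∂μ, |k t s| ≤ Ψ s) (hΨ : Integrable Ψ μ) (hg : ∀ z, |g z| ≤ 1)
    (hgL : LipschitzWith L g) (hlt : L * ∫ s, Ψ s ∂μ < 1) :
    ∃ y : X →ᵇ ℝ, ∀ t, y t = c + ∫ s, k t s * g (y s) ∂μ := by
  rcases isEmpty_or_nonempty X with _ | ⟨⟨t₀⟩⟩
  · exact ⟨0, isEmptyElim⟩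
  have hΨ0 : 0 ≤ ∫ s, Ψ s ∂μ :=
    integral_nonneg_of_ae ((hkΨ t₀).mono fun s hs => (abs_nonneg _).trans hs)
  have hcont (y : X →ᵇ ℝ) : Continuous fun t => c + ∫ s, k t s * g (y s) ∂μ :=
    continuous_const.add (continuous_of_dominated
      (aestronglyMeasurable_hammerstein hkm hgL y.continuous) (norm_hammerstein_le hkΨ hg y) hΨ
      (hkc.mono fun s hs => hs.mul continuous_const))
  have hbound (y : X →ᵇ ℝ) (t : X) :
      ‖c + ∫ s, k t s * g (y s) ∂μ‖ ≤ ‖c‖ + ∫ s, Ψ s ∂μ :=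
    (norm_add_le _ _).trans (add_le_add le_rfl
      (norm_integral_le_of_norm_le hΨ (norm_hammerstein_le hkΨ hg y t)))
  let T (y : X →ᵇ ℝ) : X →ᵇ ℝ := ofNormedAddCommGroup _ (hcont y) _ (hbound y)
  have hT : ContractingWith (L * ⟨∫ s, Ψ s ∂μ, hΨ0⟩) T := by
    refine ⟨by exact_mod_cast hlt, LipschitzWith.of_dist_le_mul fun y z => ?_⟩
    refine (dist_le (by positivity)).mpr fun t => ?_
    change dist (c + _) (c + _) ≤ _
    rw [dist_add_left, dist_eq_norm]
    exact norm_integral_hammerstein_sub_le hkm hkΨ hΨ hg hgL y z t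
  exact ⟨ContractingWith.fixedPoint T hT, fun t =>
    (DFunLike.congr_fun hT.fixedPoint_isFixedPt t).symm⟩

lemma lipschitzWith_max_rpow_neg {p l : ℝ} (hp : 0 ≤ p) (hl : 1 ≤ l) :
    LipschitzWith (p / l).toNNReal fun z : ℝ => max z l ^ (-p) := by
  have hderiv (x : ℝ) (hx : l ≤ x) : ‖-p * x ^ (-p - 1)‖ ≤ p / l := by
    have hx0 : 0 < x := by linarith
    have hle : x ^ (-p) ≤ 1 :=
      Real.rpow_le_one_of_one_le_of_nonpos (hl.trans hx) (neg_nonpos.mpr hp)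
    rw [norm_mul, norm_neg, Real.norm_of_nonneg hp, Real.norm_of_nonneg (by positivity),
      Real.rpow_sub_one hx0.ne']
    calc p * (x ^ (-p) / x) ≤ p * (1 / l) := by gcongr
      _ = p / l := by ring
  have hon : LipschitzOnWith (p / l).toNNReal (fun x : ℝ => x ^ (-p)) (Ici l) := by
    refine (convex_Ici l).lipschitzOnWith_of_nnnorm_hasDerivWithin_le (fun x hx =>
      (Real.hasDerivAt_rpow_const (Or.inl ?_)).hasDerivWithinAt) fun x hx => ?_
    · exact (zero_lt_one.trans_le (hl.trans hx)).ne'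
    · rw [← NNReal.coe_le_coe, Real.coe_toNNReal _ (by positivity)]
      exact hderiv x hx
  have h := lipschitzOnWith_univ.mp (hon.comp ((LipschitzWith.id.max_const l).lipschitzOnWith
    (s := univ)) fun z _ => le_max_right z l)
  rwa [mul_one] at h

end Hammerstein

section EmdenFowler

/-- Positive solutions on `(0, ∞)` of the Emden–Fowler equation `w'' = -ψ(t) w ^ (-p)`, the form
that the radial equation takes when the Newtonian kernel is used as the variable. -/
structure IsEmdenFowlerSolution (ψ : ℝ → ℝ) (p : ℝ) (w : ℝ → ℝ) : Prop where
  contDiffOn : ContDiffOn ℝ 2 w (Ioi 0)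
  pos : ∀ t > 0, 0 < w t
  deriv2 : ∀ t > 0, deriv^[2] w t = -(ψ t * w t ^ (-p))

variable {ψ w : ℝ → ℝ} {p : ℝ}

lemma min_rpow_neg {s : ℝ} (hs : 0 < s) (hp : 0 ≤ p) :
    min s (s ^ (-p)) = min s 1 * max s 1 ^ (-p) := by
  rcases le_total s 1 with h | h
  · rw [min_eq_left h, max_eq_right h, Real.one_rpow, mul_one, min_eq_left]
    exact h.trans (Real.one_le_rpow_of_pos_of_le_one_of_nonpos hs h (neg_nonpos.mpr hp))
  · rw [min_eq_right h, max_eq_left h, one_mul, min_eq_right]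
    exact (Real.rpow_le_one_of_one_le_of_nonpos h (neg_nonpos.mpr hp)).trans h

section Existence

/-- The kernel of the integral equation for `w(t) / (1 + t)`, where `min s t` is the Green
function of `-w''` on the half-line; `|t|` makes it continuous in `t` on the whole line. -/
noncomputable def emdenFowlerKernel (ψ : ℝ → ℝ) (p t s : ℝ) : ℝ :=
  min s |t| / (1 + |t|) * (ψ s * (1 + s) ^ (-p))

lemma continuous_emdenFowlerKernel (s : ℝ) : Continuous fun t => emdenFowlerKernel ψ p t s := by
  have hne (t : ℝ) : 1 + |t| ≠ 0 := by positivity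
  unfold emdenFowlerKernel
  fun_prop (disch := exact hne _)

lemma continuousOn_one_add_rpow : ContinuousOn (fun s : ℝ => (1 + s) ^ (-p)) (Ioi 0) :=
  ContinuousOn.rpow_const (by fun_prop) fun s (hs : 0 < s) => Or.inl (by positivity)

lemma aestronglyMeasurable_emdenFowlerKernel (hψ : ContinuousOn ψ (Ioi 0)) (t : ℝ) :
    AEStronglyMeasurable (emdenFowlerKernel ψ p t) (volume.restrict (Ioi 0)) :=
  (ContinuousOn.mul (by fun_prop) (hψ.mul continuousOn_one_add_rpow)).aestronglyMeasurable
    measurableSet_Ioi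

lemma emdenFowlerKernel_nonneg (hψ0 : ∀ s > 0, 0 ≤ ψ s) (t : ℝ) {s : ℝ} (hs : 0 < s) :
    0 ≤ emdenFowlerKernel ψ p t s := by
  have hmin : 0 ≤ min s |t| := le_min hs.le (abs_nonneg t)
  have hψs := hψ0 s hs
  unfold emdenFowlerKernel
  positivity

lemma one_add_rpow_neg_le {s : ℝ} (hs : 0 < s) (hp : 0 ≤ p) :
    (1 + s) ^ (-p) ≤ max s 1 ^ (-p) :=
  Real.rpow_le_rpow_of_nonpos (by positivity) (max_le (by linarith) (by linarith))
    (neg_nonpos.mpr hp)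

lemma abs_emdenFowlerKernel_le (hψ0 : ∀ s > 0, 0 ≤ ψ s) (hp : 0 ≤ p) (t : ℝ) {s : ℝ}
    (hs : 0 < s) : |emdenFowlerKernel ψ p t s| ≤ min s (s ^ (-p)) * ψ s := by
  have hψs := hψ0 s hs
  have hmin : min s |t| / (1 + |t|) ≤ min s 1 := by
    refine le_min ?_ ?_
    · rw [div_le_iff₀ (by positivity)]
      nlinarith [min_le_left s |t|, abs_nonneg t]
    · rw [div_le_one (by positivity)]
      linarith [min_le_right s |t|]
  have hmin0 : 0 ≤ min s 1 := le_min hs.le zero_le_one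
  rw [abs_of_nonneg (emdenFowlerKernel_nonneg hψ0 t hs), min_rpow_neg hs hp, mul_assoc,
    mul_comm _ (ψ s)]
  exact mul_le_mul hmin (mul_le_mul_of_nonneg_left (one_add_rpow_neg_le hs hp) hψs)
    (by positivity) hmin0

lemma exists_emdenFowlerKernel_fixedPoint (hψ : ContinuousOn ψ (Ioi 0))
    (hψ0 : ∀ s > 0, 0 ≤ ψ s) (hp : 0 ≤ p)
    (hi : IntegrableOn (fun s => min s (s ^ (-p)) * ψ s) (Ioi 0)) :
    ∃ l : ℝ, 1 ≤ l ∧ ∃ y : ℝ → ℝ, Continuous y ∧ (∀ t, l ≤ y t) ∧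
      ∀ t, y t = l + ∫ s in Ioi 0, emdenFowlerKernel ψ p t s * y s ^ (-p) := by
  set I := ∫ s in Ioi 0, min s (s ^ (-p)) * ψ s
  have hI : 0 ≤ I := setIntegral_nonneg measurableSet_Ioi fun s (hs : 0 < s) =>
    mul_nonneg (le_min hs.le (by positivity)) (hψ0 s hs)
  set l := 1 + p * I
  have hl1 : 1 ≤ l := le_add_of_nonneg_right (by positivity)
  have hg (z : ℝ) : |max z l ^ (-p)| ≤ 1 := by
    have hz : 1 ≤ max z l := hl1.trans (le_max_right z l)
    rw [abs_of_nonneg (by positivity)]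
    exact Real.rpow_le_one_of_one_le_of_nonpos hz (neg_nonpos.mpr hp)
  have hlt : (p / l).toNNReal * I < 1 := by
    rw [Real.coe_toNNReal _ (by positivity), div_mul_eq_mul_div, div_lt_one (by positivity)]
    linarith
  obtain ⟨y, hy⟩ := exists_hammerstein_fixedPoint l
    (aestronglyMeasurable_emdenFowlerKernel hψ) (.of_forall continuous_emdenFowlerKernel)
    (fun t => ae_restrict_of_forall_mem measurableSet_Ioi fun s hs =>
      abs_emdenFowlerKernel_le hψ0 hp t hs) hi hg (lipschitzWith_max_rpow_neg hp hl1) hlt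
  have hle (t : ℝ) : l ≤ y t := by
    rw [hy t]
    refine le_add_of_nonneg_right (setIntegral_nonneg measurableSet_Ioi fun s hs =>
      mul_nonneg (emdenFowlerKernel_nonneg hψ0 t hs) (by positivity))
  exact ⟨l, hl1, y, y.continuous, hle, fun t => by simpa only [max_eq_left (hle _)] using hy t⟩

lemma isEmdenFowlerSolution_of_integral_eq {l : ℝ} (hψ : ContinuousOn ψ (Ioi 0))
    (hw : ContinuousOn w (Ioi 0)) (h0 : ∀ t > 0, 0 < w t)
    (hi : IntegrableOn (fun s => min s 1 * (ψ s * w s ^ (-p))) (Ioi 0))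
    (heq : ∀ t > 0, w t = l * (1 + t) + ∫ s in Ioi 0, min s t * (ψ s * w s ^ (-p))) :
    IsEmdenFowlerSolution ψ p w := by
  set q : ℝ → ℝ := fun s => ψ s * w s ^ (-p)
  have hq : ContinuousOn q (Ioi 0) :=
    hψ.mul (hw.rpow_const fun s hs => Or.inl (h0 s hs).ne')
  have hderiv {t : ℝ} (ht : 0 < t) : HasDerivAt w (l + ∫ s in Ioi t, q s) t := by
    have hlin : HasDerivAt (fun t : ℝ => l * (1 + t)) l t := by
      simpa using ((hasDerivAt_id t).const_add 1).const_mul l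
    refine (hlin.add (hasDerivAt_integral_min_mul hq hi ht)).congr_of_eventuallyEq ?_
    filter_upwards [lt_mem_nhds ht] with b hb using heq b hb
  have hderiv2 {t : ℝ} (ht : 0 < t) : HasDerivAt (deriv w) (-q t) t := by
    refine ((hasDerivAt_integral_Ioi hq hi ht).const_add l).congr_of_eventuallyEq ?_
    filter_upwards [lt_mem_nhds ht] with b hb using (hderiv hb).deriv
  have hC1 : ContDiffOn ℝ 1 (deriv w) (Ioi 0) := by
    rw [← zero_add 1, contDiffOn_succ_iff_deriv_of_isOpen isOpen_Ioi, contDiffOn_zero]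
    exact ⟨fun t ht => (hderiv2 ht).differentiableAt.differentiableWithinAt, by simp,
      hq.neg.congr fun t ht => (hderiv2 ht).deriv⟩
  refine ⟨?_, h0, fun t ht => (hderiv2 ht).deriv⟩
  rw [← one_add_one_eq_two, contDiffOn_succ_iff_deriv_of_isOpen isOpen_Ioi]
  exact ⟨fun t ht => (hderiv ht).differentiableAt.differentiableWithinAt, by simp, hC1⟩

theorem exists_isEmdenFowlerSolution (hψ : ContinuousOn ψ (Ioi 0)) (hψ0 : ∀ s > 0, 0 ≤ ψ s)
    (hp : 0 ≤ p) (hi : IntegrableOn (fun s => min s (s ^ (-p)) * ψ s) (Ioi 0)) :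
    ∃ w, IsEmdenFowlerSolution ψ p w := by
  obtain ⟨l, hl, y, hyc, hyl, hy⟩ := exists_emdenFowlerKernel_fixedPoint hψ hψ0 hp hi
  have hy0 (t : ℝ) : 0 < y t := by linarith [hyl t]
  have hker {s : ℝ} (hs : 0 < s) (t : ℝ) : min s |t| * (ψ s * ((1 + s) * y s) ^ (-p)) =
      (1 + |t|) * (emdenFowlerKernel ψ p t s * y s ^ (-p)) := by
    rw [emdenFowlerKernel, Real.mul_rpow (by positivity) (hy0 s).le]
    field_simp
  have hw : ContinuousOn (fun t => (1 + t) * y t) (Ioi 0) := by fun_prop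
  have h0 (t : ℝ) (ht : 0 < t) : 0 < (1 + t) * y t := mul_pos (by positivity) (hy0 t)
  refine ⟨fun t => (1 + t) * y t, isEmdenFowlerSolution_of_integral_eq (l := l) hψ hw h0 ?_ ?_⟩
  · refine (hi.const_mul 2).mono' (ContinuousOn.aestronglyMeasurable (ContinuousOn.mul (by fun_prop)
      (hψ.mul (hw.rpow_const fun s hs => Or.inl (h0 s hs).ne'))) measurableSet_Ioi) ?_
    refine ae_restrict_of_forall_mem measurableSet_Ioi fun s hs => ?_
    have hy1 : |y s ^ (-p)| ≤ 1 := by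
      rw [abs_of_nonneg (Real.rpow_nonneg (hy0 s).le _)]
      exact Real.rpow_le_one_of_one_le_of_nonpos (hl.trans (hyl s)) (neg_nonpos.mpr hp)
    have h := hker hs 1
    rw [abs_one, one_add_one_eq_two] at h
    rw [h, norm_mul, norm_mul, Real.norm_two]
    exact mul_le_mul_of_nonneg_left ((mul_le_of_le_one_right (abs_nonneg _) hy1).trans
      (abs_emdenFowlerKernel_le hψ0 hp 1 hs)) zero_le_two
  · intro t ht
    have hint : ∫ s in Ioi 0, min s t * (ψ s * ((1 + s) * y s) ^ (-p)) =
        (1 + t) * ∫ s in Ioi 0, emdenFowlerKernel ψ p t s * y s ^ (-p) := by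
      rw [← integral_const_mul]
      refine setIntegral_congr_fun measurableSet_Ioi fun s hs => ?_
      simpa only [abs_of_pos ht] using hker hs t
    change (1 + t) * y t = _
    rw [hint, hy t]
    ring

end Existence

section Concave

variable (hw : ContDiffOn ℝ 2 w (Ioi 0)) (hconc : ConcaveOn ℝ (Ioi 0) w) (h0 : ∀ t > 0, 0 ≤ w t)
include hw

lemma hasDerivAt_of_contDiffOn_Ioi {t : ℝ} (ht : 0 < t) : HasDerivAt w (deriv w t) t :=
  ((hw.contDiffAt (Ioi_mem_nhds ht)).differentiableAt two_ne_zero).hasDerivAt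

lemma contDiffOn_deriv_Ioi : ContDiffOn ℝ 1 (deriv w) (Ioi 0) :=
  hw.deriv_of_isOpen isOpen_Ioi (by norm_num)

lemma hasDerivAt_deriv_of_contDiffOn_Ioi {t : ℝ} (ht : 0 < t) :
    HasDerivAt (deriv w) (deriv^[2] w t) t :=
  (((contDiffOn_deriv_Ioi hw).contDiffAt (Ioi_mem_nhds ht)).differentiableAt
    one_ne_zero).hasDerivAt

lemma hasDerivAt_mul_deriv_sub {t : ℝ} (ht : 0 < t) :
    HasDerivAt (fun t => t * deriv w t - w t) (t * deriv^[2] w t) t := by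
  refine (((hasDerivAt_id t).mul (hasDerivAt_deriv_of_contDiffOn_Ioi hw ht)).sub
    (hasDerivAt_of_contDiffOn_Ioi hw ht)).congr_deriv ?_
  simp only [id_eq]
  ring

lemma continuousOn_deriv2_Ioi : ContinuousOn (deriv^[2] w) (Ioi 0) :=
  ((contDiffOn_deriv_Ioi hw).deriv_of_isOpen (m := 0) isOpen_Ioi (by norm_num)).continuousOn

include hconc

lemma deriv2_nonpos_of_concaveOn_Ioi {t : ℝ} (ht : 0 < t) : deriv^[2] w t ≤ 0 := by
  have hanti : AntitoneOn (deriv w) (Ioi 0) := hconc.antitoneOn_deriv fun t ht =>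
    (hasDerivAt_of_contDiffOn_Ioi hw ht).differentiableAt
  have h := hanti.derivWithin_nonpos (x := t)
  rwa [(hasDerivAt_deriv_of_contDiffOn_Ioi hw ht).hasDerivWithinAt.derivWithin
    (isOpen_Ioi.uniqueDiffWithinAt ht)] at h

include h0

lemma deriv_nonneg_of_concaveOn_Ioi {t : ℝ} (ht : 0 < t) : 0 ≤ deriv w t := by
  have h := (monotoneOn_of_concaveOn_nonneg hconc h0).derivWithin_nonneg (x := t)
  rwa [(hasDerivAt_of_contDiffOn_Ioi hw ht).hasDerivWithinAt.derivWithin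
    (isOpen_Ioi.uniqueDiffWithinAt ht)] at h

lemma mul_deriv_le_of_concaveOn_Ioi {t : ℝ} (ht : 0 < t) : t * deriv w t ≤ w t := by
  have h := (div_antitoneOn_of_concaveOn_nonneg hconc h0).derivWithin_nonpos (x := t)
  have hquot := (hasDerivAt_of_contDiffOn_Ioi hw ht).fun_div (hasDerivAt_id' t) ht.ne'
  rw [hquot.hasDerivWithinAt.derivWithin (isOpen_Ioi.uniqueDiffWithinAt ht), mul_one,
    div_le_iff₀ (by positivity), zero_mul] at h
  linarith

lemma integrableOn_Ioi_deriv2 : IntegrableOn (deriv^[2] w) (Ioi 1) := by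
  have hcont := continuousOn_deriv2_Ioi hw
  have hsub (T : ℝ) : Icc 1 T ⊆ Ioi 0 := fun s hs => zero_lt_one.trans_le hs.1
  refine integrableOn_Ioi_of_intervalIntegral_norm_bounded (deriv w 1) 1 (fun T : ℝ =>
    ((hcont.mono (hsub T)).integrableOn_Icc.mono_set Ioc_subset_Icc_self)) tendsto_id ?_
  filter_upwards [eventually_ge_atTop 1] with T hT
  have hnorm : ∫ s in 1..T, ‖deriv^[2] w s‖ = ∫ s in 1..T, -deriv^[2] w s :=
    intervalIntegral.integral_congr fun s hs => Real.norm_of_nonpos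
      (deriv2_nonpos_of_concaveOn_Ioi hw hconc (hsub T (uIcc_of_le hT ▸ hs)))
  have hFTC : ∫ s in 1..T, deriv^[2] w s = deriv w T - deriv w 1 :=
    intervalIntegral.integral_eq_sub_of_hasDerivAt
      (fun s hs => hasDerivAt_deriv_of_contDiffOn_Ioi hw (hsub T (uIcc_of_le hT ▸ hs)))
      (hcont.mono (uIcc_of_le hT ▸ hsub T)).intervalIntegrable
  rw [hnorm, intervalIntegral.integral_neg, hFTC]
  linarith [deriv_nonneg_of_concaveOn_Ioi hw hconc h0 (zero_lt_one.trans_le hT)]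

lemma integrableOn_Ioc_mul_deriv2 : IntegrableOn (fun s => s * deriv^[2] w s) (Ioc 0 1) := by
  have hcont : ContinuousOn (fun s => s * deriv^[2] w s) (Ioi 0) :=
    continuousOn_id.mul (continuousOn_deriv2_Ioi hw)
  have hsub {δ : ℝ} (hδ : 0 < δ) : Icc δ 1 ⊆ Ioi 0 := fun s hs => hδ.trans_le hs.1
  have hδ (n : ℕ) : 0 < 1 / ((n : ℝ) + 1) := Nat.one_div_pos_of_nat
  have hδ1 (n : ℕ) : 1 / ((n : ℝ) + 1) ≤ 1 := by
    rw [div_le_one (by positivity)]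
    linarith [n.cast_nonneg (α := ℝ)]
  refine integrableOn_Ioc_of_intervalIntegral_norm_bounded_left (I := w 1) (fun n : ℕ =>
    ((hcont.mono (hsub (hδ n))).integrableOn_Icc.mono_set Ioc_subset_Icc_self))
    tendsto_one_div_add_atTop_nhds_zero_nat (.of_forall fun n => ?_)
  set δ := 1 / ((n : ℝ) + 1)
  have hnorm : ∫ s in δ..1, ‖s * deriv^[2] w s‖ = ∫ s in δ..1, -(s * deriv^[2] w s) :=
    intervalIntegral.integral_congr fun s hs => by
      have hs0 : 0 < s := hsub (hδ n) (uIcc_of_le (hδ1 n) ▸ hs)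
      exact Real.norm_of_nonpos (mul_nonpos_of_nonneg_of_nonpos hs0.le
        (deriv2_nonpos_of_concaveOn_Ioi hw hconc hs0))
  have hFTC : ∫ s in δ..1, s * deriv^[2] w s = _ :=
    intervalIntegral.integral_eq_sub_of_hasDerivAt
      (fun s hs => hasDerivAt_mul_deriv_sub hw (hsub (hδ n) (uIcc_of_le (hδ1 n) ▸ hs)))
      (hcont.mono (uIcc_of_le (hδ1 n) ▸ hsub (hδ n))).intervalIntegrable
  rw [← intervalIntegral.integral_of_le (hδ1 n), hnorm, intervalIntegral.integral_neg, hFTC]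
  linarith [deriv_nonneg_of_concaveOn_Ioi hw hconc h0 one_pos,
    mul_deriv_le_of_concaveOn_Ioi hw hconc h0 (hδ n)]

lemma integrableOn_min_mul_deriv2 : IntegrableOn (fun s => min s 1 * deriv^[2] w s) (Ioi 0) := by
  rw [← Ioc_union_Ioi_eq_Ioi zero_le_one]
  refine IntegrableOn.union ?_ ?_
  · refine (integrableOn_Ioc_mul_deriv2 hw hconc h0).congr_fun (fun s hs => ?_) measurableSet_Ioc
    simp only [min_eq_left hs.2]
  · refine (integrableOn_Ioi_deriv2 hw hconc h0).congr_fun (fun s hs => ?_) measurableSet_Ioi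
    simp only [min_eq_right (mem_Ioi.mp hs).le, one_mul]

end Concave

namespace IsEmdenFowlerSolution

variable (hw : IsEmdenFowlerSolution ψ p w)
include hw

lemma concaveOn (hψ0 : ∀ s > 0, 0 ≤ ψ s) : ConcaveOn ℝ (Ioi 0) w := by
  refine concaveOn_of_deriv2_nonpos' (convex_Ioi 0)
    (hw.contDiffOn.differentiableOn two_ne_zero)
    ((contDiffOn_deriv_Ioi hw.contDiffOn).differentiableOn one_ne_zero) fun t ht => ?_
  rw [hw.deriv2 t ht, neg_nonpos]
  exact mul_nonneg (hψ0 t ht) (Real.rpow_nonneg (hw.pos t ht).le _)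

lemma le_mul_max (hψ0 : ∀ s > 0, 0 ≤ ψ s) {t : ℝ} (ht : 0 < t) : w t ≤ w 1 * max t 1 := by
  have h0 (t : ℝ) (ht : t > 0) : 0 ≤ w t := (hw.pos t ht).le
  rcases le_total t 1 with h | h
  · rw [max_eq_right h, mul_one]
    exact monotoneOn_of_concaveOn_nonneg (hw.concaveOn hψ0) h0 ht (mem_Ioi.mpr one_pos) h
  · have hdiv := div_antitoneOn_of_concaveOn_nonneg (hw.concaveOn hψ0) h0 (mem_Ioi.mpr one_pos) ht h
    simp only [div_one] at hdiv
    rwa [max_eq_left h, ← div_le_iff₀ ht]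

theorem integrableOn (hψ : ContinuousOn ψ (Ioi 0)) (hψ0 : ∀ s > 0, 0 ≤ ψ s) (hp : 0 ≤ p) :
    IntegrableOn (fun s => min s (s ^ (-p)) * ψ s) (Ioi 0) := by
  have hw1 := hw.pos 1 one_pos
  have hint := (integrableOn_min_mul_deriv2 hw.contDiffOn (hw.concaveOn hψ0)
    fun t ht => (hw.pos t ht).le).norm.const_mul (w 1 ^ p)
  have hcont : ContinuousOn (fun s => min s (s ^ (-p)) * ψ s) (Ioi 0) :=
    (ContinuousOn.inf continuousOn_id
      (continuousOn_id.rpow_const fun s hs => Or.inl (mem_Ioi.mp hs).ne')).mul hψ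
  refine hint.mono' (hcont.aestronglyMeasurable measurableSet_Ioi)
    (ae_restrict_of_forall_mem measurableSet_Ioi fun s (hs : 0 < s) => ?_)
  have hmin : 0 ≤ min s 1 := le_min hs.le zero_le_one
  have hψs := hψ0 s hs
  have hmax : w 1 ^ (-p) * max s 1 ^ (-p) ≤ w s ^ (-p) := by
    rw [← Real.mul_rpow hw1.le (by positivity)]
    exact Real.rpow_le_rpow_of_nonpos (hw.pos s hs) (hw.le_mul_max hψ0 hs) (neg_nonpos.mpr hp)
  rw [min_rpow_neg hs hp, hw.deriv2 s hs, norm_mul (min s 1), norm_neg,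
    Real.norm_of_nonneg (by positivity), Real.norm_of_nonneg hmin,
    Real.norm_of_nonneg (mul_nonneg hψs (Real.rpow_nonneg (hw.pos s hs).le _))]
  calc min s 1 * max s 1 ^ (-p) * ψ s
      = w 1 ^ p * (min s 1 * (ψ s * (w 1 ^ (-p) * max s 1 ^ (-p)))) := by
        rw [Real.rpow_neg hw1.le]
        field_simp
    _ ≤ w 1 ^ p * (min s 1 * (ψ s * w s ^ (-p))) := by gcongr

end IsEmdenFowlerSolution

end EmdenFowler

/-! ### Reduction of the radial equation to an ordinary differential equation -/

section RadialReduction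

/-- The coefficient of the Emden–Fowler equation satisfied by the radial solutions of
`-Δ u = φ(|x|) u ^ (-p)` in dimension `d`, as functions of the Newtonian kernel
`s = |x| ^ (2 - d)`. -/
noncomputable def radialWeight (d : ℝ) (φ : ℝ → ℝ) (s : ℝ) : ℝ :=
  φ (s ^ (1 / (2 - d))) * (s ^ (1 / (2 - d))) ^ (2 * (d - 1)) / (d - 2) ^ 2

variable {φ : ℝ → ℝ} {d p : ℝ}

lemma radialWeight_nonneg (hφ0 : ∀ r > 0, 0 ≤ φ r) {s : ℝ} (hs : 0 < s) :
    0 ≤ radialWeight d φ s := by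
  have hφs := hφ0 (s ^ (1 / (2 - d))) (by positivity)
  unfold radialWeight
  positivity

lemma continuousOn_radialWeight (hφ : ContinuousOn φ (Ioi 0)) :
    ContinuousOn (radialWeight d φ) (Ioi 0) := by
  have hpow : ContinuousOn (fun s : ℝ => s ^ (1 / (2 - d))) (Ioi 0) :=
    continuousOn_id.rpow_const fun s hs => Or.inl (mem_Ioi.mp hs).ne'
  have hpos (s : ℝ) (hs : 0 < s) : 0 < s ^ (1 / (2 - d)) := by positivity
  exact ((hφ.comp hpow hpos).mul
    (hpow.rpow_const fun s hs => Or.inl (hpos s hs).ne')).div_const _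

lemma radialWeight_rpow (hd : 2 - d ≠ 0) {r : ℝ} (hr : 0 < r) :
    radialWeight d φ (r ^ (2 - d)) = φ r * r ^ (2 * (d - 1)) / (d - 2) ^ 2 := by
  rw [radialWeight, ← Real.rpow_mul hr.le, mul_one_div_cancel hd, Real.rpow_one]

lemma integrableOn_radialWeight_iff (hd : 2 < d) :
    IntegrableOn (fun s => min s (s ^ (-p)) * radialWeight d φ s) (Ioi 0) ↔
      IntegrableOn (fun r => min r (r ^ (d - 1 + p * (d - 2))) * φ r) (Ioi 0) := by
  have hd2 : 0 < d - 2 := by linarith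
  have hd2' : 2 - d ≠ 0 := by linarith
  rw [← integrableOn_Ioi_comp_rpow_iff _ hd2', IntegrableOn, IntegrableOn,
    ← integrable_const_mul_iff (c := (d - 2)⁻¹) (by simpa using hd2.ne')
      (fun r => min r (r ^ (d - 1 + p * (d - 2))) * φ r)]
  refine integrableOn_congr_fun (fun r (hr : 0 < r) => ?_) measurableSet_Ioi
  have hmin : r ^ (d - 1) * min (r ^ (2 - d)) ((r ^ (2 - d)) ^ (-p)) =
      min r (r ^ (d - 1 + p * (d - 2))) := by
    rw [mul_min_of_nonneg _ _ (by positivity), ← Real.rpow_mul hr.le, ← Real.rpow_add hr,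
      ← Real.rpow_add hr]
    ring_nf
    rw [Real.rpow_one]
  have hpow : r ^ (2 - d - 1) * r ^ (2 * (d - 1)) = r ^ (d - 1) := by
    rw [← Real.rpow_add hr]
    ring_nf
  rw [radialWeight_rpow hd2' hr, abs_of_neg (by linarith), ← hmin, ← hpow, smul_eq_mul]
  field_simp
  ring

end RadialReduction

section PosSolution

variable {E : Type*} [NormedAddCommGroup E] [InnerProductSpace ℝ E] {φ : ℝ → ℝ}

lemma radialWeight_newtonKernel (hd : 3 ≤ finrank ℝ E) {x : E} (hx : x ≠ 0) :
    radialWeight (finrank ℝ E) φ (newtonKernel x) *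
      ((finrank ℝ E - 2) ^ 2 * ‖x‖ ^ (-(2 * (finrank ℝ E - 1)) : ℝ)) = φ ‖x‖ := by
  have hnorm : 0 < ‖x‖ := norm_pos_iff.mpr hx
  have hd2 : ((finrank ℝ E : ℝ) - 2) ≠ 0 := by linarith [two_sub_finrank_neg hd]
  rw [newtonKernel, radialWeight_rpow (two_sub_finrank_neg hd).ne hnorm, Real.rpow_neg hnorm.le]
  field_simp

variable [FiniteDimensional ℝ E] {p : ℝ} {u : E → ℝ}

lemma IsPosSolution.eq_of_norm_eq_of_rpow (hu : IsPosSolution (fun r s => φ r * s ^ (-p)) u)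
    (hd : 3 ≤ finrank ℝ E) (hφ0 : ∀ r > 0, 0 ≤ φ r) (hp : 0 ≤ p) {x y : E} (hx : x ≠ 0)
    (hxy : ‖x‖ = ‖y‖) : u x = u y :=
  hu.eq_of_norm_eq hd (fun r hr _ hs => mul_nonneg (hφ0 r hr) (Real.rpow_nonneg hs.le _))
    (fun r hr _ hs _ _ hst => mul_le_mul_of_nonneg_left
      (Real.rpow_le_rpow_of_nonpos hs hst (neg_nonpos.mpr hp)) (hφ0 r hr)) hx hxy

lemma meanProfile_eq_of_forall_norm_eq {g : E → ℝ} {t : ℝ}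
    (hg : ∀ y, ‖y‖ = ‖(newtonPoint t : E)‖ → g y = g (newtonPoint t)) :
    meanProfile g t = g (newtonPoint t) :=
  (sphericalMean_congr hg).trans (sphericalMean_const _)

lemma IsPosSolution.isEmdenFowlerSolution_meanProfile
    (hu : IsPosSolution (fun r s => φ r * s ^ (-p)) u) (hd : 3 ≤ finrank ℝ E)
    (hrad : ∀ x y : E, x ≠ 0 → ‖x‖ = ‖y‖ → u x = u y) :
    IsEmdenFowlerSolution (radialWeight (finrank ℝ E) φ) p (meanProfile u) := by
  have hmean {t : ℝ} (ht : 0 < t) : meanProfile u t = u (newtonPoint t) :=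
    meanProfile_eq_of_forall_norm_eq fun y hy =>
      (hrad _ y (newtonPoint_ne_zero hd ht) hy.symm).symm
  refine ⟨fun t ht => (contDiffAt_meanProfile hd hu.contDiffOn ht).contDiffWithinAt,
    fun t ht => hmean ht ▸ hu.pos _ (newtonPoint_ne_zero hd ht), fun t ht => ?_⟩
  set x : E := newtonPoint t
  have hx : x ≠ 0 := newtonPoint_ne_zero hd ht
  have hΔ : meanProfile (Δ u) t = -(φ ‖x‖ * u x ^ (-p)) := by
    rw [meanProfile_eq_of_forall_norm_eq fun y hy => ?_, hu.laplacian_eq hx]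
    have hy0 : y ≠ 0 := norm_pos_iff.mp (hy ▸ norm_pos_iff.mpr hx)
    rw [hu.laplacian_eq hy0, hu.laplacian_eq hx, hy, hrad y x hy0 hy]
  have hode := deriv2_meanProfile hd hu.contDiffOn ht
  have hweight := radialWeight_newtonKernel (φ := φ) hd hx
  rw [newtonKernel_newtonPoint hd ht] at hweight
  rw [hΔ, ← hweight] at hode
  have hd2 : 0 < (finrank ℝ E : ℝ) - 2 := by linarith [two_sub_finrank_neg hd]
  have hnorm : 0 < ‖x‖ := norm_pos_iff.mpr hx
  rw [hmean ht]
  refine mul_right_cancel₀ (b := ((finrank ℝ E : ℝ) - 2) ^ 2 *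
    ‖x‖ ^ (-(2 * (finrank ℝ E - 1)) : ℝ)) (by positivity) (hode.trans ?_)
  ring

lemma IsEmdenFowlerSolution.isPosSolution_comp_newtonKernel {w : ℝ → ℝ}
    (hw : IsEmdenFowlerSolution (radialWeight (finrank ℝ E) φ) p w) (hd : 3 ≤ finrank ℝ E) :
    IsPosSolution (fun r s => φ r * s ^ (-p)) (w ∘ (newtonKernel : E → ℝ)) := by
  have hwx {x : E} (hx : x ≠ 0) : ContDiffAt ℝ 2 w (newtonKernel x) :=
    hw.contDiffOn.contDiffAt (Ioi_mem_nhds (newtonKernel_pos hx))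
  refine ⟨fun x hx => ((hwx hx).comp x (contDiffAt_newtonKernel hx)).contDiffWithinAt,
    fun x hx => hw.pos _ (newtonKernel_pos hx), fun x hx => ?_⟩
  rw [laplacian_comp_newtonKernel hx (hwx hx), hw.deriv2 _ (newtonKernel_pos hx),
    ← radialWeight_newtonKernel (φ := φ) hd hx, Function.comp_apply]
  ring

theorem exists_isPosSolution_iff (hd : 3 ≤ finrank ℝ E) (hφ : ContinuousOn φ (Ioi 0))
    (hφ0 : ∀ r > 0, 0 ≤ φ r) (hp : 0 ≤ p) :
    (∃ u : E → ℝ, IsPosSolution (fun r s => φ r * s ^ (-p)) u) ↔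
      IntegrableOn (fun r => min r (r ^ (finrank ℝ E - 1 + p * (finrank ℝ E - 2))) * φ r)
        (Ioi 0) := by
  have hd2 : (2 : ℝ) < finrank ℝ E := by linarith [two_sub_finrank_neg hd]
  have hψ := continuousOn_radialWeight (d := finrank ℝ E) hφ
  have hψ0 (s : ℝ) (hs : 0 < s) : 0 ≤ radialWeight (finrank ℝ E) φ s := radialWeight_nonneg hφ0 hs
  rw [← integrableOn_radialWeight_iff hd2]
  constructor
  · rintro ⟨u, hu⟩
    exact (hu.isEmdenFowlerSolution_meanProfile hd fun x y hx =>
      hu.eq_of_norm_eq_of_rpow hd hφ0 hp hx).integrableOn hψ hψ0 hp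
  · intro hi
    obtain ⟨w, hw⟩ := exists_isEmdenFowlerSolution hψ hψ0 hp hi
    exact ⟨_, hw.isPosSolution_comp_newtonKernel hd⟩

end PosSolution

/-! ### Powers times powers of a logarithm -/

section PowerLog

variable {a b : ℝ}

lemma continuousOn_rpow_mul_log_rpow :
    ContinuousOn (fun r : ℝ => r ^ a * Real.log (1 + r) ^ b) (Ioi 0) := by
  have hlog (r : ℝ) (hr : 0 < r) : 0 < Real.log (1 + r) := Real.log_pos (by linarith)
  refine (continuousOn_id.rpow_const fun r hr => Or.inl (mem_Ioi.mp hr).ne').mul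
    (ContinuousOn.rpow_const ?_ fun r hr => Or.inl (hlog r hr).ne')
  exact ContinuousOn.log (by fun_prop) fun r (hr : 0 < r) => by positivity

lemma rpow_mul_log_rpow_nonneg {r : ℝ} (hr : 0 ≤ r) : 0 ≤ r ^ a * Real.log (1 + r) ^ b :=
  mul_nonneg (Real.rpow_nonneg hr _) (Real.rpow_nonneg (Real.log_nonneg (by linarith)) _)

lemma integrableOn_of_forall_nonneg_le {f g : ℝ → ℝ} {s : Set ℝ} (hs : MeasurableSet s)
    (hf : ContinuousOn f s) (hg : IntegrableOn g s) (h0 : ∀ r ∈ s, 0 ≤ f r)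
    (hfg : ∀ r ∈ s, f r ≤ g r) : IntegrableOn f s := by
  refine Integrable.mono' hg (hf.aestronglyMeasurable hs) ?_
  filter_upwards [ae_restrict_mem hs] with r hr
  rw [Real.norm_of_nonneg (h0 r hr)]
  exact hfg r hr

lemma integrableOn_Ioc_rpow_mul_log_rpow_iff (hb : 0 ≤ b) :
    IntegrableOn (fun r : ℝ => r ^ a * Real.log (1 + r) ^ b) (Ioc 0 1) ↔ -1 < a + b := by
  have hsplit {r : ℝ} (hr : r ∈ Ioc (0 : ℝ) 1) : r ^ (a + b) = r ^ a * r ^ b :=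
    Real.rpow_add hr.1 a b
  have hlower {r : ℝ} (hr : r ∈ Ioc (0 : ℝ) 1) : r / 2 ≤ Real.log (1 + r) := by
    refine le_trans ?_ (Real.le_log_one_add_of_nonneg hr.1.le)
    rw [div_le_div_iff₀ two_pos (by linarith [hr.1])]
    nlinarith [hr.1, hr.2]
  have hupper {r : ℝ} (hr : r ∈ Ioc (0 : ℝ) 1) : Real.log (1 + r) ≤ r := by
    linarith [Real.log_le_sub_one_of_pos (by linarith [hr.1] : 0 < 1 + r)]
  rw [← intervalIntegral.integrableOn_Ioo_rpow_iff one_pos, ← integrableOn_Ioc_iff_integrableOn_Ioo]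
  constructor
  · intro h
    refine integrableOn_of_forall_nonneg_le measurableSet_Ioc
      (continuousOn_id.rpow_const fun r hr => Or.inl hr.1.ne') (h.const_mul (2 ^ b))
      (fun r hr => Real.rpow_nonneg hr.1.le _) fun r hr => ?_
    have hpow : (r / 2) ^ b ≤ Real.log (1 + r) ^ b :=
      Real.rpow_le_rpow (by linarith [hr.1]) (hlower hr) hb
    rw [Real.div_rpow hr.1.le zero_le_two, div_le_iff₀' (by positivity)] at hpow
    calc r ^ (a + b) = r ^ a * r ^ b := hsplit hr
      _ ≤ r ^ a * (2 ^ b * Real.log (1 + r) ^ b) :=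
        mul_le_mul_of_nonneg_left hpow (Real.rpow_nonneg hr.1.le _)
      _ = 2 ^ b * (r ^ a * Real.log (1 + r) ^ b) := by ring
  · intro h
    refine integrableOn_of_forall_nonneg_le measurableSet_Ioc
      (continuousOn_rpow_mul_log_rpow.mono Ioc_subset_Ioi_self) h
      (fun r hr => rpow_mul_log_rpow_nonneg hr.1.le) fun r hr => ?_
    rw [hsplit hr]
    exact mul_le_mul_of_nonneg_left (Real.rpow_le_rpow
      (Real.log_nonneg (by linarith [hr.1])) (hupper hr) hb) (Real.rpow_nonneg hr.1.le _)

lemma exists_log_one_add_rpow_le {ε : ℝ} (hε : 0 < ε) (hb : 0 ≤ b) :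
    ∃ C, ∀ r ≥ 1, Real.log (1 + r) ^ b ≤ C * r ^ (ε * b) := by
  refine ⟨(2 ^ ε / ε) ^ b, fun r hr => ?_⟩
  have hr0 : 0 ≤ r := zero_le_one.trans hr
  have hlog : Real.log (1 + r) ≤ 2 ^ ε / ε * r ^ ε :=
    calc Real.log (1 + r) ≤ (1 + r) ^ ε / ε := Real.log_le_rpow_div (by linarith) hε
      _ ≤ (2 * r) ^ ε / ε := by
        exact div_le_div_of_nonneg_right
          (Real.rpow_le_rpow (by linarith) (by linarith) hε.le) hε.le
      _ = 2 ^ ε / ε * r ^ ε := by rw [Real.mul_rpow zero_le_two hr0]; ring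
  calc Real.log (1 + r) ^ b ≤ (2 ^ ε / ε * r ^ ε) ^ b :=
        Real.rpow_le_rpow (Real.log_nonneg (by linarith)) hlog hb
    _ = (2 ^ ε / ε) ^ b * r ^ (ε * b) := by
        rw [Real.mul_rpow (by positivity) (by positivity), ← Real.rpow_mul hr0]

lemma integrableOn_Ioi_rpow_mul_log_rpow_iff (hb : 0 ≤ b) :
    IntegrableOn (fun r : ℝ => r ^ a * Real.log (1 + r) ^ b) (Ioi 1) ↔ a < -1 := by
  constructor
  · intro h
    have hlog2 : 0 < Real.log 2 := Real.log_pos one_lt_two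
    rw [← integrableOn_Ioi_rpow_iff one_pos]
    refine integrableOn_of_forall_nonneg_le measurableSet_Ioi
      (continuousOn_id.rpow_const fun r hr => Or.inl (zero_lt_one.trans hr).ne')
      (h.const_mul (Real.log 2 ^ b)⁻¹)
      (fun r hr => Real.rpow_nonneg (zero_lt_one.trans hr).le _) fun r (hr : 1 < r) => ?_
    have hpow : Real.log 2 ^ b ≤ Real.log (1 + r) ^ b :=
      Real.rpow_le_rpow hlog2.le (Real.log_le_log two_pos (by linarith)) hb
    rw [le_inv_mul_iff₀ (by positivity), mul_comm]
    exact mul_le_mul_of_nonneg_left hpow (by positivity)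
  · intro h
    obtain ⟨ε, hε, hεb⟩ : ∃ ε > 0, a + ε * b < -1 := by
      refine ⟨(-1 - a) / (b + 1), div_pos (by linarith) (by linarith), ?_⟩
      have : (-1 - a) / (b + 1) * b < -1 - a := by
        rw [div_mul_eq_mul_div, div_lt_iff₀ (by linarith)]
        exact mul_lt_mul_of_pos_left (by linarith) (by linarith)
      linarith
    obtain ⟨C, hC⟩ := exists_log_one_add_rpow_le hε hb
    refine integrableOn_of_forall_nonneg_le measurableSet_Ioi
      (continuousOn_rpow_mul_log_rpow.mono (Ioi_subset_Ioi zero_le_one))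
      (((integrableOn_Ioi_rpow_iff one_pos).mpr hεb).const_mul C)
      (fun r hr => rpow_mul_log_rpow_nonneg (zero_lt_one.trans hr).le) fun r (hr : 1 < r) => ?_
    have hr0 : 0 < r := zero_lt_one.trans hr
    calc r ^ a * Real.log (1 + r) ^ b ≤ r ^ a * (C * r ^ (ε * b)) :=
          mul_le_mul_of_nonneg_left (hC r hr.le) (by positivity)
      _ = C * r ^ (a + ε * b) := by rw [Real.rpow_add hr0]; ring

lemma integrableOn_min_mul_rpow_mul_log_rpow_iff {m : ℝ} (hm : 1 ≤ m) (hb : 0 ≤ b) :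
    IntegrableOn (fun r : ℝ => min r (r ^ m) * (r ^ a * Real.log (1 + r) ^ b)) (Ioi 0) ↔
      -1 < m + a + b ∧ a < -2 := by
  rw [← Ioc_union_Ioi_eq_Ioi zero_le_one, integrableOn_union]
  refine and_congr ?_ ?_
  · rw [← integrableOn_Ioc_rpow_mul_log_rpow_iff hb]
    refine integrableOn_congr_fun (fun r hr => ?_) measurableSet_Ioc
    have hmin : min r (r ^ m) = r ^ m :=
      min_eq_right (by simpa using Real.rpow_le_rpow_of_exponent_ge hr.1 hr.2 hm)
    simp only [hmin, Real.rpow_add hr.1, mul_assoc]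
  · rw [show a < -2 ↔ 1 + a < -1 by constructor <;> intro <;> linarith,
      ← integrableOn_Ioi_rpow_mul_log_rpow_iff hb]
    refine integrableOn_congr_fun (fun r (hr : 1 < r) => ?_) measurableSet_Ioi
    have hmin : min r (r ^ m) = r :=
      min_eq_left (by simpa using Real.rpow_le_rpow_of_exponent_le hr.le hm)
    simp only [hmin, Real.rpow_add (zero_lt_one.trans hr), Real.rpow_one, mul_assoc]

end PowerLog

theorem statement_18_general {E : Type*} [NormedAddCommGroup E] [InnerProductSpace ℝ E]
    [FiniteDimensional ℝ E] (hd : 3 ≤ finrank ℝ E) {α β p : ℝ} (hβ : 0 ≤ β) (hp : 0 ≤ p) :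
    ((∃ u : E → ℝ, IsPosSolution (fun r s => r ^ α * Real.log (1 + r) ^ β * s ^ (-p)) u) ↔
      0 < finrank ℝ E + α + β + p * (finrank ℝ E - 2) ∧ α < -2) ∧
    ∀ u : E → ℝ, IsPosSolution (fun r s => r ^ α * Real.log (1 + r) ^ β * s ^ (-p)) u →
      ∀ x y : E, x ≠ 0 → ‖x‖ = ‖y‖ → u x = u y := by
  have hφ0 (r : ℝ) (hr : 0 < r) : 0 ≤ r ^ α * Real.log (1 + r) ^ β :=
    rpow_mul_log_rpow_nonneg hr.le
  have hd2 : (0 : ℝ) < finrank ℝ E - 2 := by linarith [two_sub_finrank_neg hd]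
  refine ⟨?_, fun u hu x y hx hxy => hu.eq_of_norm_eq_of_rpow hd hφ0 hp hx hxy⟩
  rw [exists_isPosSolution_iff hd continuousOn_rpow_mul_log_rpow hφ0 hp,
    integrableOn_min_mul_rpow_mul_log_rpow_iff (by nlinarith) hβ]
  exact and_congr_left' (by constructor <;> intro <;> linarith)

section EuclideanSpace

variable {N : ℕ} {u : EuclideanSpace ℝ (Fin N) → ℝ}

lemma laplacian_eq_innerProductSpace_laplacian : laplacian u = Δ u := by
  rw [InnerProductSpace.laplacian_eq_iteratedFDeriv_orthonormalBasis u
    (EuclideanSpace.basisFun (Fin N) ℝ)]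
  simp only [EuclideanSpace.basisFun_apply]
  rfl

lemma isSol_iff_isPosSolution {φ : ℝ → ℝ} {p : ℝ} :
    IsSol φ p u ↔ IsPosSolution (fun r s => φ r * s ^ (-p)) u := by
  rw [IsSol, laplacian_eq_innerProductSpace_laplacian]
  exact ⟨fun h => ⟨h.1, fun x hx => (h.2 x hx).1, fun x hx => (h.2 x hx).2⟩,
    fun h => ⟨h.contDiffOn, fun x hx => ⟨h.pos x hx, h.neg_laplacian x hx⟩⟩⟩

end EuclideanSpace

/-- Corollary 4.4: for `φ(r) = r^α log^β(1+r)`, the equation `-Δu = φ(|x|) u^{-p}` has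
solutions iff `N + α + β + p(N-2) > 0` and `α < -2`; in that case every solution is
radially symmetric. -/
theorem statement_18 {N : ℕ} (hN : 3 ≤ N) (α : ℝ) (β p : ℝ) (hβ : 0 < β) (hp : 0 < p) :
    ((∃ u : EuclideanSpace ℝ (Fin N) → ℝ,
        IsSol (fun r => r ^ α * Real.log (1 + r) ^ β) p u) ↔
      (0 < (N:ℝ) + α + β + p * ((N:ℝ) - 2) ∧ α < -2)) ∧
    ((0 < (N:ℝ) + α + β + p * ((N:ℝ) - 2) ∧ α < -2) →
      ∀ u : EuclideanSpace ℝ (Fin N) → ℝ,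
        IsSol (fun r => r ^ α * Real.log (1 + r) ^ β) p u →
        ∀ x y : EuclideanSpace ℝ (Fin N), x ≠ 0 → y ≠ 0 → ‖x‖ = ‖y‖ → u x = u y) := by
  have h := statement_18_general (E := EuclideanSpace ℝ (Fin N)) (by simpa using hN) (α := α)
    hβ.le hp.le
  simp only [finrank_euclideanSpace_fin, ← isSol_iff_isPosSolution] at h
  exact ⟨h.1, fun _ u hu x y hx _ hxy => h.2 u hu x y hx hxy⟩
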